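/- Let f : ℝ² → ℝ² be a C^∞ map with f(0)=0 of the form f = (x, xy + y⁶ + Σ_{i+j≥7} a_{ij} x^i y^j). Then a_{08} − (3/5)a_{07}² ≠ 0 if and only if f is A-equivalent to (x,y) ↦ (x, xy + y⁶ + εy⁸ + αy⁹) for some ε ∈ {1,−1} and some α ∈ ℝ; and (a_{08} − (3/5)a_{07}² = 0 and a_{09} − (7/25)a_{07}³ ≠ 0) if and only if f is A-equivalent to (x,y) ↦ (x, xy + y⁶ + y⁹). -/

import Mathlib

open Filter Topology

noncomputable section

/-- Directional derivative of a scalar function. -/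
def dop (v : ℝ × ℝ) (g : ℝ × ℝ → ℝ) : ℝ × ℝ → ℝ :=
  fun p => fderiv ℝ g p v

/-- Partial derivative operator in the first coordinate. -/
def pdx : (ℝ × ℝ → ℝ) → ℝ × ℝ → ℝ := dop (1, 0)

/-- Partial derivative operator in the second coordinate. -/
def pdy : (ℝ × ℝ → ℝ) → ℝ × ℝ → ℝ := dop (0, 1)

/-- Taylor coefficient `a_{ij} = ∂_x^i ∂_y^j g(0,0) / (i! j!)` of `g` at the origin. -/
def tcoeff (g : ℝ × ℝ → ℝ) (i j : ℕ) : ℝ :=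
  (pdx^[i] (pdy^[j] g)) 0 / (Nat.factorial i * Nat.factorial j)

/-- The Jacobian determinant `λ_f` of a map `f : ℝ² → ℝ²`. -/
def jacDet (f : ℝ × ℝ → ℝ × ℝ) (p : ℝ × ℝ) : ℝ :=
  (fderiv ℝ f p (1, 0)).1 * (fderiv ℝ f p (0, 1)).2 -
    (fderiv ℝ f p (1, 0)).2 * (fderiv ℝ f p (0, 1)).1

/-- `f` has corank one at `0` : the derivative of `f` at `0` has rank one. -/
def CorankOne (f : ℝ × ℝ → ℝ × ℝ) : Prop :=
  LinearMap.rank ((fderiv ℝ f 0).toLinearMap) = 1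

/-- `η` is a null vector field for `f` near `0`. -/
def IsNullVF (f η : ℝ × ℝ → ℝ × ℝ) : Prop :=
  η 0 ≠ 0 ∧ ∃ U ∈ 𝓝 (0 : ℝ × ℝ),
    ContDiffOn ℝ (⊤ : ℕ∞) η U ∧ ∀ p ∈ U, jacDet f p = 0 → fderiv ℝ f p (η p) = 0

/-- The derivative `(ηg)(p) = Dg(p)(η(p))` of `g` along the vector field `η`. -/
def etaD (η : ℝ × ℝ → ℝ × ℝ) (g : ℝ × ℝ → ℝ) : ℝ × ℝ → ℝ :=
  fun p => fderiv ℝ g p (η p)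

/-- The iterated derivative `η^k g` along the vector field `η`. -/
def etaIter (η : ℝ × ℝ → ℝ × ℝ) : ℕ → (ℝ × ℝ → ℝ) → ℝ × ℝ → ℝ
  | 0, g => g
  | k + 1, g => etaD η (etaIter η k g)

/-- The Hessian matrix of second partial derivatives of `g` at `0`. -/
def hess (g : ℝ × ℝ → ℝ) : Matrix (Fin 2) (Fin 2) ℝ :=
  !![pdx (pdx g) 0, pdx (pdy g) 0; pdy (pdx g) 0, pdy (pdy g) 0]

/-- `A^r`-equivalence of the `r`-jets at `0` of two map-germs `(ℝ²,0) → (ℝ²,0)`. -/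
def JetEquiv (r : ℕ) (f g : ℝ × ℝ → ℝ × ℝ) : Prop :=
  ∃ φ ψ : ℝ × ℝ → ℝ × ℝ,
    ContDiff ℝ (⊤ : ℕ∞) φ ∧ ContDiff ℝ (⊤ : ℕ∞) ψ ∧ φ 0 = 0 ∧ ψ 0 = 0 ∧
    Function.Bijective (⇑(fderiv ℝ φ 0)) ∧ Function.Bijective (⇑(fderiv ℝ ψ 0)) ∧
    ∀ i ≤ r, iteratedFDeriv ℝ i (ψ ∘ f ∘ φ) 0 = iteratedFDeriv ℝ i g 0

/-- `A`-equivalence of two map-germs `(ℝ²,0) → (ℝ²,0)`. -/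
def AEquiv (f g : ℝ × ℝ → ℝ × ℝ) : Prop :=
  ∃ φ ψ : ℝ × ℝ → ℝ × ℝ,
    ContDiff ℝ (⊤ : ℕ∞) φ ∧ ContDiff ℝ (⊤ : ℕ∞) ψ ∧ φ 0 = 0 ∧ ψ 0 = 0 ∧
    Function.Bijective (⇑(fderiv ℝ φ 0)) ∧ Function.Bijective (⇑(fderiv ℝ ψ 0)) ∧
    ∀ᶠ p in 𝓝 (0 : ℝ × ℝ), ψ (f (φ p)) = g p

/-- `f` has the form `(x, g(x,y))` where `g` is `C^∞` and the Taylor coefficients of `g`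
of total degree `< N` at the origin are prescribed by `P`. -/
def HasForm (f : ℝ × ℝ → ℝ × ℝ) (g : ℝ × ℝ → ℝ) (N : ℕ) (P : ℕ → ℕ → ℝ) : Prop :=
  ContDiff ℝ (⊤ : ℕ∞) g ∧ (∀ p, f p = (p.1, g p)) ∧
    ∀ i j, i + j < N → tcoeff g i j = P i j

/-! The critical set of `f = (x, g (x, y))` is a smooth curve `x = σ y`, and its image is the
*discriminant curve* `y ↦ (σ y, g (σ y, y))`. `A`-equivalence of germs of this kind with
`(x, x * y + N y)` amounts to equivalence of the discriminant curves. Indeed the discriminant curve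
of `(x, x * y + N y)` is `y ↦ (-N' y, N y - y * N' y)`, whose tangent at the parameter `y` has slope
`y`; a function `G` with the same critical values along the same curve therefore satisfies
`∂G/∂x = y` there, so that it differs from `x * y + N y` by a multiple of `(x + N' y) ^ 2`, and this
difference is absorbed by a change of the `y` coordinate.

The discriminant curve of `f` has components of orders `5` and `6` at the origin. The quadratic part
of a coordinate change of the target only contributes from order `10` on, so comparing the first
terms under linear changes shows that `a₀₈ - 3 / 5 * a₀₇ ^ 2` and
`a₀₉ - 7 / 5 * a₀₇ * a₀₈ + 14 / 25 * a₀₇ ^ 3` are invariant up to factors `s ^ 2` and `s ^ 3`.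
Conversely, when they are not both zero the remaining terms can be removed. Those of orders
`10, …, 19` of the second component are removed one at a time, by monomials `X ^ a * Y ^ b` if the
order lies in the semigroup generated by `5` and `6`, and by a displacement transversal to the curve
at that order if it is `13`, `14` or `19`. Everything from the conductor `20` on is removed at once
by smooth division by `t ^ 5`, which follows from Borel's lemma and the division of flat
functions. -/

open scoped ContDiff

/-! ### Smooth division and implicit functions -/

section SmoothDivision

variable {E G : Type*} [NormedAddCommGroup E] [NormedSpace ℝ E] [FiniteDimensional ℝ E]
  [NormedAddCommGroup G] [NormedSpace ℝ G]

lemma hasFDerivAt_parametric_intervalIntegral {F : E × ℝ → G} (hF : ContDiff ℝ 1 F) (a b : ℝ)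
    (p : E) :
    HasFDerivAt (fun p => ∫ s in a..b, F (p, s))
      (∫ s in a..b, fderiv ℝ F (p, s) ∘L .inl ℝ E ℝ) p := by
  have : ProperSpace E := FiniteDimensional.proper ℝ E
  have hslice (q : E) : Continuous fun s : ℝ => (q, s) := by fun_prop
  have hF' : Continuous fun q : E × ℝ => fderiv ℝ F q ∘L .inl ℝ E ℝ :=
    (hF.continuous_fderiv one_ne_zero).clm_comp continuous_const
  obtain ⟨C, hC⟩ := ((isCompact_closedBall p 1).prod
    (isCompact_uIcc (a := a) (b := b))).exists_bound_of_continuousOn hF'.continuousOn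
  refine intervalIntegral.hasFDerivAt_integral_of_dominated_of_fderiv_le (𝕜 := ℝ)
    (s := Metric.closedBall p 1) (bound := fun _ => C) (F := fun p s => F (p, s))
    (F' := fun p s => fderiv ℝ F (p, s) ∘L .inl ℝ E ℝ)
    (Metric.closedBall_mem_nhds p one_pos)
    (.of_forall fun q => (hF.continuous.comp (hslice q)).aestronglyMeasurable)
    ((hF.continuous.comp (hslice p)).intervalIntegrable _ _)
    (hF'.comp (hslice p)).aestronglyMeasurable
    (.of_forall fun s hs q hq => hC (q, s) ⟨hq, Set.uIoc_subset_uIcc hs⟩)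
    intervalIntegrable_const (.of_forall fun s _ q _ => ?_)
  exact ((hF.differentiable one_ne_zero).differentiableAt.hasFDerivAt (x := (q, s))).comp q
    (hasFDerivAt_prodMk_left q s)

theorem contDiff_parametric_intervalIntegral [CompleteSpace G] {F : E × ℝ → G}
    (hF : ContDiff ℝ ∞ F) (a b : ℝ) : ContDiff ℝ ∞ fun p => ∫ s in a..b, F (p, s) := by
  refine contDiff_infty.2 fun n => ?_
  induction n generalizing F with
  | zero =>
    exact contDiff_zero.2 <| intervalIntegral.continuous_parametric_intervalIntegral_of_continuous'
      (f := fun p s => F (p, s)) hF.continuous a b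
  | succ n ih =>
    have hderiv := hasFDerivAt_parametric_intervalIntegral (hF.of_le (by simp)) a b
    have hF' : ContDiff ℝ ∞ (fderiv ℝ F) := hF.fderiv_right (by simp)
    push_cast
    refine contDiff_succ_iff_fderiv_apply.2
      ⟨fun p => (hderiv p).differentiableAt, by simp, fun v => ?_⟩
    have hint (p : E) : IntervalIntegrable (fun s => fderiv ℝ F (p, s) ∘L .inl ℝ E ℝ)
        MeasureTheory.volume a b :=
      ((hF'.continuous.comp (by fun_prop : Continuous fun s : ℝ => (p, s))).clm_comp
        continuous_const).intervalIntegrable _ _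
    have hv : (fun p => fderiv ℝ (fun p => ∫ s in a..b, F (p, s)) p v) =
        fun p => ∫ s in a..b, fderiv ℝ F (p, s) (v, 0) := by
      funext p
      rw [(hderiv p).fderiv]
      exact ContinuousLinearMap.intervalIntegral_apply (hint p) v
    rw [hv]
    exact ih (F := fun q => fderiv ℝ F q (v, 0)) (hF'.clm_apply contDiff_const)

theorem exists_contDiff_eq_add_mul {F : E × ℝ → ℝ} (hF : ContDiff ℝ ∞ F) :
    ∃ K : E × ℝ → ℝ, ContDiff ℝ ∞ K ∧ (∀ p w, F (p, w) = F (p, 0) + w * K (p, w)) ∧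
      ∀ p, HasDerivAt (fun w => F (p, w)) (K (p, 0)) 0 := by
  have hslice (p : E) (w : ℝ) : HasDerivAt (fun w => F (p, w)) (fderiv ℝ F (p, w) (0, 1)) w :=
    (hF.differentiable (by simp)).differentiableAt.hasFDerivAt.comp_hasDerivAt w
      ((hasDerivAt_const w p).prodMk (hasDerivAt_id w))
  have hF' : ContDiff ℝ ∞ fun q => fderiv ℝ F q (0, 1) :=
    (hF.fderiv_right (by simp)).clm_apply contDiff_const
  refine ⟨fun q => ∫ s in (0 : ℝ)..1, fderiv ℝ F (q.1, s * q.2) (0, 1), ?_, fun p w => ?_,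
    fun p => by simpa using hslice p 0⟩
  · exact contDiff_parametric_intervalIntegral
      (F := fun r : (E × ℝ) × ℝ => fderiv ℝ F (r.1.1, r.2 * r.1.2) (0, 1))
      (hF'.comp (by fun_prop : ContDiff ℝ ∞ fun r : (E × ℝ) × ℝ => (r.1.1, r.2 * r.1.2))) 0 1
  · have hray (s : ℝ) :
        HasDerivAt (fun s => F (p, s * w)) (w * fderiv ℝ F (p, s * w) (0, 1)) s := by
      simpa [mul_comm, Function.comp_def] using
        (hslice p (s * w)).comp s ((hasDerivAt_id s).mul_const w)
    have hcont : Continuous fun s : ℝ => w * fderiv ℝ F (p, s * w) (0, 1) :=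
      continuous_const.mul
        (hF'.continuous.comp (by fun_prop : Continuous fun s : ℝ => (p, s * w)))
    have hftc := intervalIntegral.integral_eq_sub_of_hasDerivAt (fun s _ => hray s)
      (hcont.intervalIntegrable 0 1)
    simp only [intervalIntegral.integral_const_mul, one_mul, zero_mul] at hftc
    linarith

lemma exists_contDiff_eq_add_mul_add_sq_mul {F : E × ℝ → ℝ} (hF : ContDiff ℝ ∞ F) :
    ∃ (D : E → ℝ) (Q : E × ℝ → ℝ), ContDiff ℝ ∞ D ∧ ContDiff ℝ ∞ Q ∧
      (∀ p, HasDerivAt (fun w => F (p, w)) (D p) 0) ∧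
      ∀ p w, F (p, w) = F (p, 0) + w * D p + w ^ 2 * Q (p, w) := by
  obtain ⟨K, hK, hFK, hderiv⟩ := exists_contDiff_eq_add_mul hF
  obtain ⟨Q, hQ, hKQ, -⟩ := exists_contDiff_eq_add_mul hK
  refine ⟨fun p => K (p, 0), Q, by fun_prop, hQ, hderiv, fun p w => ?_⟩
  rw [hFK, hKQ p w]
  ring

lemma exists_contDiff_eventuallyEq {u : E → G} {x : E}
    (hu : ∀ᶠ p in 𝓝 x, ContDiffAt ℝ ∞ u p) : ∃ v, ContDiff ℝ ∞ v ∧ v =ᶠ[𝓝 x] u := by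
  obtain ⟨r, hr, hball⟩ := Metric.eventually_nhds_iff_ball.1 hu
  let b : ContDiffBump x := ⟨r / 4, r / 2, by positivity, by linarith⟩
  refine ⟨fun p => b p • u p, contDiff_iff_contDiffAt.2 fun p => ?_, ?_⟩
  · by_cases hp : p ∈ Metric.ball x r
    · exact b.contDiff.contDiffAt.smul (hball p hp)
    · have hout : p ∈ (Metric.closedBall x (r / 2))ᶜ := by
        simp only [Metric.mem_ball, not_lt, Set.mem_compl_iff, Metric.mem_closedBall, not_le] at *
        linarith
      refine contDiffAt_const (c := 0) |>.congr_of_eventuallyEq ?_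
      filter_upwards [Metric.isClosed_closedBall.isOpen_compl.mem_nhds hout] with q hq
      rw [b.zero_of_le_dist (by simpa using hq : r / 2 < dist q x).le, zero_smul]
  · filter_upwards [b.eventuallyEq_one] with p hp
    simp [hp]

lemma contDiffAt_implicitFunction_eventually {F : E × ℝ → ℝ} (hF : ContDiff ℝ ∞ F)
    {p₀ : E} {Z : E → ℝ} (hZ : ∀ᶠ p in 𝓝 p₀, ContinuousAt Z p)
    (hzero : ∀ᶠ p in 𝓝 p₀, F (p, Z p) = 0)
    (hne : ∀ᶠ p in 𝓝 p₀, (fderiv ℝ F (p, Z p) ∘L .inr ℝ E ℝ).IsInvertible) :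
    ∀ᶠ p in 𝓝 p₀, ContDiffAt ℝ ∞ Z p := by
  filter_upwards [hZ, hzero.eventually_nhds, hne] with p hcont hloc hinv
  have hFp : ContDiffAt ℝ ∞ F (p, Z p) := hF.contDiffAt
  refine (hFp.contDiffAt_implicitFunction (by simp) hinv).congr_of_eventuallyEq ?_
  have hgraph : Tendsto (fun q => (q, Z q)) (𝓝 p) (𝓝 (p, Z p)) := continuousAt_id.prodMk hcont
  filter_upwards [hgraph.eventually
    (hFp.eventually_apply_eq_iff_implicitFunction (by simp) hinv), hloc] with q huniq hq
  exact (huniq.1 (by rw [hq, hloc.self_of_nhds])).symm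

theorem exists_contDiff_implicitFunction {F : E × ℝ → ℝ} (hF : ContDiff ℝ ∞ F) {p₀ : E}
    {z₀ c : ℝ} (h₀ : F (p₀, z₀) = 0) (hderiv : HasDerivAt (fun z => F (p₀, z)) c z₀)
    (hc : c ≠ 0) :
    ∃ z : E → ℝ, ContDiff ℝ ∞ z ∧ z p₀ = z₀ ∧ (∀ᶠ p in 𝓝 p₀, F (p, z p) = 0) ∧
      ∀ᶠ q in 𝓝 (p₀, z₀), F q = 0 → z q.1 = q.2 := by
  have hinv {q : E × ℝ} (hq : fderiv ℝ F q (0, 1) ≠ 0) :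
      (fderiv ℝ F q ∘L .inr ℝ E ℝ).IsInvertible :=
    ⟨ContinuousLinearEquiv.unitsEquivAut ℝ (Units.mk0 _ hq), by ext; simp⟩
  have hpartial : fderiv ℝ F (p₀, z₀) (0, 1) = c :=
    ((hF.differentiable (by simp)).differentiableAt.hasFDerivAt.comp_hasDerivAt z₀
      ((hasDerivAt_const z₀ p₀).prodMk (hasDerivAt_id z₀))).unique hderiv
  have hF₁ : ContDiffAt ℝ 1 F (p₀, z₀) := hF.contDiffAt.of_le (by simp)
  have hinv₀ := hinv (hpartial.trans_ne hc)
  let Z := hF₁.implicitFunction one_ne_zero hinv₀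
  have hZ₀ : Z p₀ = z₀ := hF₁.implicitFunction_apply_self one_ne_zero hinv₀
  have hzero : ∀ᶠ p in 𝓝 p₀, F (p, Z p) = 0 := by
    simpa [h₀] using hF₁.eventually_apply_implicitFunction one_ne_zero hinv₀
  have hZ : ContDiffAt ℝ 1 Z p₀ := hF₁.contDiffAt_implicitFunction one_ne_zero hinv₀
  have hne : ∀ᶠ p in 𝓝 p₀, fderiv ℝ F (p, Z p) (0, 1) ≠ 0 := by
    have hcont : Continuous fun q => fderiv ℝ F q (0, 1) :=
      (hF.continuous_fderiv (by simp)).clm_apply continuous_const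
    refine ContinuousAt.eventually_ne (hcont.continuousAt.comp
      (continuousAt_id.prodMk hZ.continuousAt)) ?_
    simpa [hZ₀, hpartial] using hc
  have hsmooth := contDiffAt_implicitFunction_eventually hF
    ((hZ.eventually (by simp)).mono fun p hp => hp.continuousAt) hzero (hne.mono fun p => hinv)
  obtain ⟨z, hz, hzZ⟩ := exists_contDiff_eventuallyEq hsmooth
  refine ⟨z, hz, by rw [hzZ.self_of_nhds, hZ₀], ?_, ?_⟩
  · filter_upwards [hzZ, hzero] with p hp hp'
    rw [hp, hp']
  · have hfst : Tendsto Prod.fst (𝓝 (p₀, z₀)) (𝓝 p₀) := continuous_fst.tendsto _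
    filter_upwards [hF₁.eventually_apply_eq_iff_implicitFunction one_ne_zero hinv₀,
      hfst.eventually hzZ] with q huniq hq hFq
    rw [hq]
    exact huniq.1 (hFq.trans h₀.symm)

end SmoothDivision

section OneVariable

lemma exists_contDiff_eq_add_id_mul {h : ℝ → ℝ} (hh : ContDiff ℝ ∞ h) :
    ∃ k : ℝ → ℝ, ContDiff ℝ ∞ k ∧ ∀ y, h y = h 0 + y * k y := by
  obtain ⟨K, hK, hhK, -⟩ := exists_contDiff_eq_add_mul (E := ℝ) (F := fun q => h q.2) (by fun_prop)
  exact ⟨fun y => K (0, y), by fun_prop, hhK 0⟩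

lemma iteratedDeriv_succ_id_mul_zero {k : ℝ → ℝ} (hk : ContDiff ℝ ∞ k) (n : ℕ) :
    iteratedDeriv (n + 1) (fun y => y * k y) 0 = (n + 1) * iteratedDeriv n k 0 := by
  rw [iteratedDeriv_fun_mul contDiffAt_fun_id (hk.of_le (by exact_mod_cast le_top)).contDiffAt,
    Finset.sum_eq_single_of_mem 1 (by simp)]
  · simp [iteratedDeriv_fun_id]
  · intro i _ hi
    rcases i with _ | _ | i <;> simp_all [iteratedDeriv_fun_id]

theorem exists_contDiff_eq_taylor_add_pow_mul (n : ℕ) {h : ℝ → ℝ} (hh : ContDiff ℝ ∞ h) :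
    ∃ k : ℝ → ℝ, ContDiff ℝ ∞ k ∧ ∀ y, h y =
      ∑ j ∈ Finset.range n, iteratedDeriv j h 0 / (Nat.factorial j) * y ^ j + y ^ n * k y := by
  induction n generalizing h with
  | zero => exact ⟨h, hh, by simp⟩
  | succ n ih =>
    obtain ⟨k, hk, hhk⟩ := exists_contDiff_eq_add_id_mul hh
    obtain ⟨r, hr, hkr⟩ := ih hk
    have hcoeff (j : ℕ) : iteratedDeriv (j + 1) h 0 / (Nat.factorial (j + 1)) =
        iteratedDeriv j k 0 / (Nat.factorial j) := by
      have hshift : iteratedDeriv (j + 1) h 0 = (j + 1) * iteratedDeriv j k 0 := by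
        rw [← iteratedDeriv_succ_id_mul_zero hk, funext hhk]
        simp [iteratedDeriv_const_add]
      rw [hshift, Nat.factorial_succ]
      push_cast
      exact mul_div_mul_left _ _ (by positivity)
    refine ⟨r, hr, fun y => ?_⟩
    rw [hhk y, hkr y, Finset.sum_range_succ']
    simp only [hcoeff, pow_succ, ← mul_assoc, ← Finset.sum_mul]
    simp
    ring

end OneVariable

section Borel

lemma exists_forall_abs_iteratedDeriv_le {χ : ℝ → ℝ} (hχ : ContDiff ℝ ∞ χ)
    (hsupp : HasCompactSupport χ) (m : ℕ) : ∃ M, ∀ z, |iteratedDeriv m χ z| ≤ M := by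
  refine (hχ.continuous_iteratedDeriv m (by exact_mod_cast le_top)).bounded_above_of_compact_support
    ?_
  rw [iteratedDeriv_eq_equiv_comp]
  exact (hsupp.iteratedFDeriv (𝕜 := ℝ) m).comp_left (by simp)

lemma abs_iteratedDeriv_const_mul_pow_mul_comp_const_mul_le {χ : ℝ → ℝ} (hχ : ContDiff ℝ ∞ χ)
    {j m : ℕ} (hmj : m < j) {M L : ℝ}
    (hM : ∀ z, |iteratedDeriv m (fun z => z ^ j * χ z) z| ≤ M) (hL : 1 ≤ L) (c u : ℝ) :
    |iteratedDeriv m (fun u => c * (u ^ j * χ (L * u))) u| ≤ |c| * M / L := by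
  have hL₀ : 0 < L := one_pos.trans_le hL
  have hscale : (fun u => c * (u ^ j * χ (L * u))) =
      fun u => c * (L ^ j)⁻¹ * (fun z => z ^ j * χ z) (L * u) := by
    funext u
    field_simp
    ring
  have hsmooth : ContDiff ℝ m fun z => z ^ j * χ z :=
    (contDiff_id.pow j).mul (hχ.of_le (by exact_mod_cast le_top))
  rw [hscale, iteratedDeriv_const_mul_field, iteratedDeriv_comp_const_mul hsmooth, abs_mul, abs_mul,
    abs_mul, abs_inv, abs_pow, abs_pow, abs_of_pos hL₀]
  have hM₀ : 0 ≤ M := (abs_nonneg _).trans (hM 0)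
  have hpow : (L ^ j)⁻¹ * L ^ m ≤ L⁻¹ := by
    rw [inv_mul_le_iff₀ (by positivity), ← div_eq_mul_inv, le_div_iff₀ hL₀, ← pow_succ]
    exact pow_le_pow_right₀ hL hmj
  calc |c| * (L ^ j)⁻¹ * (L ^ m * |iteratedDeriv m (fun z => z ^ j * χ z) (L * u)|)
      ≤ |c| * (L ^ j)⁻¹ * (L ^ m * M) := by gcongr; exact hM _
    _ = |c| * M * ((L ^ j)⁻¹ * L ^ m) := by ring
    _ ≤ |c| * M * L⁻¹ := by gcongr

lemma exists_forall_abs_iteratedDeriv_le_half_pow {χ : ℝ → ℝ} (hχ : ContDiff ℝ ∞ χ)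
    (hsupp : HasCompactSupport χ) (j : ℕ) (c : ℝ) :
    ∃ L : ℝ, 1 ≤ L ∧ ∀ m < j, ∀ u,
      |iteratedDeriv m (fun u => c * (u ^ j * χ (L * u))) u| ≤ (1 / 2) ^ j := by
  have hbound (m : ℕ) : ∃ M, ∀ z, |iteratedDeriv m (fun z => z ^ j * χ z) z| ≤ M :=
    exists_forall_abs_iteratedDeriv_le ((contDiff_id.pow j).mul hχ) hsupp.mul_left m
  choose M hM using hbound
  have hM₀ (m : ℕ) : 0 ≤ M m := (abs_nonneg _).trans (hM m 0)
  have hsum : 0 ≤ ∑ m ∈ Finset.range j, M m := Finset.sum_nonneg fun m _ => hM₀ m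
  set L := 1 + 2 ^ j * (|c| * ∑ m ∈ Finset.range j, M m) with hL
  have hL₁ : 1 ≤ L := le_add_of_nonneg_right (by positivity)
  refine ⟨L, hL₁, fun m hm u =>
    (abs_iteratedDeriv_const_mul_pow_mul_comp_const_mul_le hχ hm (hM m) hL₁ c u).trans ?_⟩
  have hMm : M m ≤ ∑ m ∈ Finset.range j, M m :=
    Finset.single_le_sum (fun i _ => hM₀ i) (Finset.mem_range.2 hm)
  rw [div_le_iff₀ (one_pos.trans_le hL₁), one_div, inv_pow, ← div_eq_inv_mul,
    le_div_iff₀ (by positivity)]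
  calc |c| * M m * 2 ^ j ≤ |c| * (∑ m ∈ Finset.range j, M m) * 2 ^ j := by gcongr
    _ ≤ L := by rw [hL]; linarith

lemma iteratedDeriv_pow_mul_comp_const_mul_zero {χ : ℝ → ℝ} (hχ : ∀ᶠ z in 𝓝 0, χ z = 1)
    (m j : ℕ) (c L : ℝ) :
    iteratedDeriv m (fun u => c / j.factorial * (u ^ j * χ (L * u))) 0 =
      if j = m then c else 0 := by
  have htend : Tendsto (fun u => L * u) (𝓝 0) (𝓝 0) := by
    simpa using (continuous_const_mul L).tendsto 0
  have hloc : (fun u => c / j.factorial * (u ^ j * χ (L * u))) =ᶠ[𝓝 0]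
      fun u => c / j.factorial * u ^ j := by
    filter_upwards [htend.eventually hχ] with u hu
    rw [hu, mul_one]
  rw [hloc.iteratedDeriv_eq, iteratedDeriv_const_mul_field, iteratedDeriv_fun_pow_zero]
  have hj : (j.factorial : ℝ) ≠ 0 := Nat.cast_ne_zero.2 j.factorial_ne_zero
  rcases eq_or_ne j m with rfl | hjm
  · simp [div_mul_cancel₀ _ hj]
  · simp [hjm, hjm.symm]

lemma contDiff_and_iteratedDeriv_tsum_of_le_half_pow {t : ℕ → ℝ → ℝ}
    (ht : ∀ j, ContDiff ℝ ∞ (t j)) (hsupp : ∀ j, HasCompactSupport (t j))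
    (hbound : ∀ j, ∀ m < j, ∀ u, |iteratedDeriv m (t j) u| ≤ (1 / 2) ^ j) :
    (ContDiff ℝ ∞ fun u => ∑' j, t j u) ∧ ∀ m u, iteratedDeriv m (fun u => ∑' j, t j u) u =
      ∑' j, iteratedDeriv m (t j) u := by
  choose C hC using fun m j => exists_forall_abs_iteratedDeriv_le (ht j) (hsupp j) m
  let v (m j : ℕ) : ℝ := if m < j then (1 / 2) ^ j else C m j
  have hv (m : ℕ) : Summable (v m) := by
    refine summable_geometric_two.congr_atTop ?_
    filter_upwards [eventually_gt_atTop m] with j hj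
    simp only [v, if_pos hj]
  have htv (m j : ℕ) (u : ℝ) : ‖iteratedFDeriv ℝ m (t j) u‖ ≤ v m j := by
    rw [norm_iteratedFDeriv_eq_norm_iteratedDeriv, Real.norm_eq_abs]
    by_cases hmj : m < j
    · simpa only [v, if_pos hmj] using hbound j m hmj u
    · simpa only [v, if_neg hmj] using hC m j u
  refine ⟨contDiff_tsum ht (fun m _ => hv m) fun m j u _ => htv m j u, fun m u => ?_⟩
  have hsummable : Summable fun j => iteratedFDeriv ℝ m (t j) u :=
    .of_norm_bounded (hv m) fun j => htv m j u
  rw [iteratedDeriv_eq_iteratedFDeriv, iteratedFDeriv_tsum_apply ht (fun m _ => hv m)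
    (fun m j u _ => htv m j u) le_top, ContinuousMultilinearMap.tsum_eval hsummable]
  simp only [iteratedDeriv_eq_iteratedFDeriv]

/-- **Borel's lemma**. -/
theorem exists_contDiff_iteratedDeriv_zero_eq (c : ℕ → ℝ) :
    ∃ H : ℝ → ℝ, ContDiff ℝ ∞ H ∧ ∀ n, iteratedDeriv n H 0 = c n := by
  let b : ContDiffBump (0 : ℝ) := ⟨1, 2, by norm_num, by norm_num⟩
  have hb : ContDiff ℝ ∞ b := b.contDiff
  choose L hL hbound using fun j =>
    exists_forall_abs_iteratedDeriv_le_half_pow hb b.hasCompactSupport j (c j / j.factorial)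
  have hsupp (j : ℕ) :
      HasCompactSupport fun u => c j / j.factorial * (u ^ j * b (L j * u)) :=
    ((b.hasCompactSupport.comp_homeomorph
      (Homeomorph.mulLeft₀ (L j) (one_pos.trans_le (hL j)).ne')).mul_left).mul_left
  obtain ⟨hsmooth, hderiv⟩ := contDiff_and_iteratedDeriv_tsum_of_le_half_pow
    (fun j => contDiff_const.mul ((contDiff_id.pow j).mul (hb.comp (contDiff_const_smul (L j)))))
    hsupp hbound
  refine ⟨_, hsmooth, fun n => ?_⟩
  rw [hderiv]
  simp [iteratedDeriv_pow_mul_comp_const_mul_zero b.eventuallyEq_one]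

end Borel

section Flat

/-- A smooth function of one variable is flat if its Taylor series at the origin vanishes. -/
def Flat (h : ℝ → ℝ) : Prop := ContDiff ℝ ∞ h ∧ ∀ n, iteratedDeriv n h 0 = 0

lemma Flat.deriv {h : ℝ → ℝ} (hh : Flat h) : Flat (deriv h) :=
  ⟨(contDiff_infty_iff_deriv.1 hh.1).2, fun n => by
    rw [← iteratedDeriv_succ', hh.2 (n + 1)]⟩

lemma Flat.of_id_mul {k : ℝ → ℝ} (hk : ContDiff ℝ ∞ k) (hflat : Flat fun y => y * k y) :
    Flat k := by
  refine ⟨hk, fun n => ?_⟩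
  have hzero := hflat.2 (n + 1)
  rw [iteratedDeriv_succ_id_mul_zero hk] at hzero
  exact (mul_eq_zero.1 hzero).resolve_left (by positivity)

lemma Flat.exists_eq_pow_mul {h : ℝ → ℝ} (hh : Flat h) (n : ℕ) :
    ∃ k, Flat k ∧ ∀ y, h y = y ^ n * k y := by
  induction n generalizing h with
  | zero => exact ⟨h, hh, by simp⟩
  | succ n ih =>
    obtain ⟨k, hk, hhk⟩ := exists_contDiff_eq_add_id_mul hh.1
    have hh₀ : h 0 = 0 := by simpa using hh.2 0
    rw [funext hhk, hh₀] at hh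
    simp only [zero_add] at hh
    obtain ⟨r, hr, hkr⟩ := ih (Flat.of_id_mul hk hh)
    exact ⟨r, hr, fun y => by rw [hhk, hkr, hh₀]; ring⟩

lemma iteratedDeriv_pow_mul_zero_of_lt {k : ℝ → ℝ} (hk : ContDiff ℝ ∞ k) {m n : ℕ}
    (hmn : m < n) : iteratedDeriv m (fun y => y ^ n * k y) 0 = 0 := by
  induction n generalizing m with
  | zero => simp at hmn
  | succ n ih =>
    cases m with
    | zero => simp
    | succ m =>
      simp only [pow_succ', mul_assoc]
      rw [iteratedDeriv_succ_id_mul_zero (k := fun y => y ^ n * k y) (by fun_prop),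
        ih (by omega), mul_zero]

lemma exists_continuous_leftInverse_pow {n : ℕ} (hn : Odd n) :
    ∃ r : ℝ → ℝ, Continuous r ∧ (∀ u, r u ^ n = u) ∧ ∀ y, r (y ^ n) = y := by
  have hsurj : Function.Surjective fun y : ℝ => y ^ n :=
    (continuous_pow n).surjective (tendsto_pow_atTop hn.pos.ne') <|
      (tendsto_neg_atTop_atBot.comp
        ((tendsto_pow_atTop hn.pos.ne').comp tendsto_neg_atBot_atTop)).congr fun y => by
          simp [hn.neg_pow]
  let e := (hn.strictMono_pow.orderIsoOfSurjective _ hsurj).toHomeomorph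
  exact ⟨e.symm, e.symm.continuous, e.apply_symm_apply, e.symm_apply_apply⟩

lemma Flat.exists_hasDerivAt_comp_root {n : ℕ} (hn : n ≠ 0) {r : ℝ → ℝ} (hr : Continuous r)
    (hpow : ∀ u, r u ^ n = u) {h : ℝ → ℝ} (hh : Flat h) :
    ∃ k, Flat k ∧ ∀ u, HasDerivAt (fun u => h (r u)) (k (r u)) u := by
  obtain ⟨k, hk, hhk⟩ := hh.deriv.exists_eq_pow_mul (n - 1)
  have hn' : (n : ℝ) ≠ 0 := Nat.cast_ne_zero.2 hn
  have hr₀ {u : ℝ} (hu : u ≠ 0) : r u ≠ 0 := fun h => hu (by rw [← hpow u, h, zero_pow hn])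
  have hderiv {u : ℝ} (hu : u ≠ 0) : HasDerivAt (fun u => h (r u)) ((n : ℝ)⁻¹ * k (r u)) u := by
    have hroot : HasDerivAt r (n * r u ^ (n - 1))⁻¹ u :=
      (hasDerivAt_pow n (r u)).of_local_left_inverse hr.continuousAt
        (mul_ne_zero hn' (pow_ne_zero _ (hr₀ hu))) (.of_forall hpow)
    refine ((hh.1.differentiable (by simp)).differentiableAt.hasDerivAt.comp u
      hroot).congr_deriv ?_
    rw [hhk, mul_inv, mul_comm, mul_assoc, inv_mul_cancel_left₀ (pow_ne_zero _ (hr₀ hu))]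
  have hcont : Continuous fun u => (n : ℝ)⁻¹ * k (r u) := (hk.1.continuous.comp hr).const_mul _
  refine ⟨fun y => (n : ℝ)⁻¹ * k y, ⟨contDiff_const.mul hk.1, fun m => ?_⟩, fun u => ?_⟩
  · rw [iteratedDeriv_const_mul_field, hk.2, mul_zero]
  · rcases eq_or_ne u 0 with rfl | hu
    · exact hasDerivAt_of_hasDerivAt_of_ne (fun u hu => hderiv hu)
        (hh.1.continuous.comp hr).continuousAt hcont.continuousAt
    · exact hderiv hu

theorem Flat.exists_eq_comp_pow {n : ℕ} (hn : Odd n) {h : ℝ → ℝ} (hh : Flat h) :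
    ∃ F : ℝ → ℝ, ContDiff ℝ ∞ F ∧ ∀ y, h y = F (y ^ n) := by
  obtain ⟨r, hr, hpow, hleft⟩ := exists_continuous_leftInverse_pow hn
  refine ⟨fun u => h (r u), contDiff_infty.2 fun m => ?_, fun y => congrArg h (hleft y).symm⟩
  induction m generalizing h with
  | zero => exact contDiff_zero.2 (hh.1.continuous.comp hr)
  | succ m ih =>
    obtain ⟨k, hk, hderiv⟩ := hh.exists_hasDerivAt_comp_root hn.pos.ne' hr hpow
    push_cast
    rw [contDiff_succ_iff_deriv, funext fun u => (hderiv u).deriv]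
    exact ⟨fun u => (hderiv u).differentiableAt, by simp, ih hk⟩

end Flat

section PowDivision

lemma exists_eq_sum_mul_add_pow_mul (n : ℕ) {w : ℕ → ℝ → ℝ} (hw : ∀ i, ContDiff ℝ ∞ (w i))
    (hw₀ : ∀ i, w i 0 ≠ 0) {ρ : ℝ → ℝ} (hρ : ContDiff ℝ ∞ ρ) :
    ∃ (a : ℕ → ℝ) (r : ℝ → ℝ), ContDiff ℝ ∞ r ∧
      ∀ t, ρ t = ∑ i ∈ Finset.range n, a i * (t ^ i * w i t) + t ^ n * r t := by
  induction n generalizing ρ w with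
  | zero => exact ⟨0, ρ, hρ, by simp⟩
  | succ n ih =>
    obtain ⟨k, hk, hρk⟩ := exists_contDiff_eq_add_id_mul hρ
    obtain ⟨v, hv, hwv⟩ := exists_contDiff_eq_add_id_mul (hw 0)
    obtain ⟨a, r, hr, hkr⟩ := ih (fun i => hw (i + 1)) (fun i => hw₀ (i + 1))
      (hk.sub (contDiff_const.mul hv) : ContDiff ℝ ∞ fun t => k t - ρ 0 / w 0 0 * v t)
    refine ⟨fun | 0 => ρ 0 / w 0 0 | i + 1 => a i, r, hr, fun t => ?_⟩
    rw [Finset.sum_range_succ', hρk t]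
    simp only [pow_succ', mul_assoc, mul_left_comm _ t, ← Finset.mul_sum, pow_zero, one_mul]
    rw [hwv t]
    linear_combination t * hkr t + (div_mul_cancel₀ (ρ 0) (hw₀ 0)).symm

lemma exists_forall_eq_sum_pow_mul_add (n : ℕ) {w : ℕ → ℝ → ℝ} (hw : ∀ i, ContDiff ℝ ∞ (w i))
    (hw₀ : ∀ i, w i 0 ≠ 0) {ρ : ℝ → ℝ} (hρ : ContDiff ℝ ∞ ρ) :
    ∃ (a : ℕ → ℕ → ℝ) (r : ℕ → ℝ → ℝ), (∀ K, ContDiff ℝ ∞ (r K)) ∧ ∀ K t,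
      ρ t = ∑ i ∈ Finset.range n, (∑ k ∈ Finset.range K, a i k * (t ^ n) ^ k) * (t ^ i * w i t) +
        (t ^ n) ^ K * r K t := by
  choose! a r hr hdiv using fun ρ (hρ : ContDiff ℝ ∞ ρ) =>
    exists_eq_sum_mul_add_pow_mul n hw hw₀ hρ
  have hiter (K : ℕ) : ContDiff ℝ ∞ (r^[K] ρ) := by
    induction K with
    | zero => exact hρ
    | succ K ih => rw [Function.iterate_succ_apply']; exact hr _ ih
  refine ⟨fun i k => a (r^[k] ρ) i, fun K => r^[K] ρ, hiter, fun K t => ?_⟩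
  induction K with
  | zero => simp
  | succ K ih =>
    beta_reduce at ih ⊢
    rw [ih, hdiv _ (hiter K) t, Function.iterate_succ_apply', mul_add, ← add_assoc, Finset.mul_sum,
      ← Finset.sum_add_distrib]
    congr 1
    · refine Finset.sum_congr rfl fun i _ => ?_
      rw [Finset.sum_range_succ]
      ring
    · ring

lemma flat_of_forall_exists_eq_pow_mul {n : ℕ} (hn : n ≠ 0) {h : ℝ → ℝ} (hh : ContDiff ℝ ∞ h)
    (hdiv : ∀ K, ∃ k, ContDiff ℝ ∞ k ∧ ∀ t, h t = (t ^ n) ^ K * k t) : Flat h := by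
  refine ⟨hh, fun m => ?_⟩
  obtain ⟨k, hk, hhk⟩ := hdiv (m + 1)
  rw [funext hhk]
  simp only [← pow_mul]
  exact iteratedDeriv_pow_mul_zero_of_lt hk
    (Nat.lt_of_succ_le (Nat.le_mul_of_pos_left _ (by omega)))

lemma exists_flat_sub_sum_comp_pow_mul {n : ℕ} (hn : n ≠ 0) {w : ℕ → ℝ → ℝ}
    (hw : ∀ i, ContDiff ℝ ∞ (w i)) (hw₀ : ∀ i, w i 0 ≠ 0) {ρ : ℝ → ℝ} (hρ : ContDiff ℝ ∞ ρ) :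
    ∃ H : ℕ → ℝ → ℝ, (∀ i, ContDiff ℝ ∞ (H i)) ∧
      Flat fun t => ρ t - ∑ i ∈ Finset.range n, H i (t ^ n) * (t ^ i * w i t) := by
  obtain ⟨a, r, hr, hρr⟩ := exists_forall_eq_sum_pow_mul_add n hw hw₀ hρ
  choose H hH hderiv using fun i =>
    exists_contDiff_iteratedDeriv_zero_eq fun k => a i k * k.factorial
  have hfac (k : ℕ) : (k.factorial : ℝ) ≠ 0 := Nat.cast_ne_zero.2 (Nat.factorial_ne_zero k)
  refine ⟨H, hH, flat_of_forall_exists_eq_pow_mul hn (by fun_prop) fun K => ?_⟩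
  choose R hR hHR using fun i => exists_contDiff_eq_taylor_add_pow_mul K (hH i)
  refine ⟨fun t => r K t - ∑ i ∈ Finset.range n, R i (t ^ n) * (t ^ i * w i t), by fun_prop,
    fun t => ?_⟩
  have hsum : ∑ i ∈ Finset.range n, H i (t ^ n) * (t ^ i * w i t) =
      ∑ i ∈ Finset.range n, (∑ k ∈ Finset.range K, a i k * (t ^ n) ^ k) * (t ^ i * w i t) +
        (t ^ n) ^ K * ∑ i ∈ Finset.range n, R i (t ^ n) * (t ^ i * w i t) := by
    rw [Finset.mul_sum, ← Finset.sum_add_distrib]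
    refine Finset.sum_congr rfl fun i _ => ?_
    rw [hHR i]
    simp only [hderiv, mul_div_cancel_right₀ _ (hfac _)]
    ring
  rw [hsum, hρr K t]
  ring

/-- A case of **Malgrange's preparation theorem**: over the ring of smooth functions of `t ^ n`,
`n` odd, all smooth functions are generated by `1, t, …, t ^ (n - 1)` up to units. -/
theorem exists_eq_sum_comp_pow_mul {n : ℕ} (hn : Odd n) {w : ℕ → ℝ → ℝ}
    (hw : ∀ i, ContDiff ℝ ∞ (w i)) (hw₀ : ∀ i, w i 0 ≠ 0) (hw₁ : ∀ t, w 0 t = 1) {ρ : ℝ → ℝ}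
    (hρ : ContDiff ℝ ∞ ρ) :
    ∃ h : ℕ → ℝ → ℝ, (∀ i, ContDiff ℝ ∞ (h i)) ∧
      ∀ t, ρ t = ∑ i ∈ Finset.range n, h i (t ^ n) * (t ^ i * w i t) := by
  obtain ⟨H, hH, hflat⟩ := exists_flat_sub_sum_comp_pow_mul hn.pos.ne' hw hw₀ hρ
  obtain ⟨F, hF, hflatF⟩ := hflat.exists_eq_comp_pow hn
  refine ⟨fun i => if i = 0 then fun u => H 0 u + F u else H i, fun i => ?_, fun t => ?_⟩
  · beta_reduce
    split_ifs
    · exact (hH 0).add hF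
    · exact hH i
  · have hsplit (f : ℕ → ℝ) : ∑ i ∈ Finset.range n, f i =
        ∑ i ∈ (Finset.range n).erase 0, f i + f 0 :=
      (Finset.sum_erase_add _ _ (Finset.mem_range.2 hn.pos)).symm
    have hF' := hflatF t
    rw [hsplit] at hF' ⊢
    have herase : ∀ i ∈ (Finset.range n).erase 0,
        (if i = 0 then fun u => H 0 u + F u else H i) (t ^ n) * (t ^ i * w i t) =
          H i (t ^ n) * (t ^ i * w i t) := fun i hi => by rw [if_neg (Finset.ne_of_mem_erase hi)]
    rw [Finset.sum_congr rfl herase]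
    simp only [hw₁, if_pos] at hF' ⊢
    linear_combination hF'

end PowDivision

/-! ### Cubic jets -/

/-- The Taylor expansion of `f` at `0` begins with `c₀ + c₁ y + c₂ y² + c₃ y³`. -/
def HasCubicJet (f : ℝ → ℝ) (c₀ c₁ c₂ c₃ : ℝ) : Prop :=
  ∃ R : ℝ → ℝ, ContDiff ℝ ∞ R ∧
    ∀ᶠ y in 𝓝 0, f y = c₀ + c₁ * y + c₂ * y ^ 2 + c₃ * y ^ 3 + y ^ 4 * R y

lemma eventuallyEq_of_pow_mul_eq {f g : ℝ → ℝ} (n : ℕ) (hf : Continuous f) (hg : Continuous g)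
    (h : ∀ᶠ y in 𝓝 0, y ^ n * f y = y ^ n * g y) : f =ᶠ[𝓝 0] g := by
  refine (ContinuousAt.eventuallyEq_nhds_iff_eventuallyEq_nhdsNE
    hf.continuousAt hg.continuousAt).1 ?_
  filter_upwards [nhdsWithin_le_nhds h, self_mem_nhdsWithin] with y hy hy₀
  exact mul_left_cancel₀ (pow_ne_zero n hy₀) hy

lemma eq_zero_and_eventually_eq_zero_of_add_id_mul {c : ℝ} {K : ℝ → ℝ} (hK : Continuous K)
    (h : ∀ᶠ y in 𝓝 (0 : ℝ), c + y * K y = 0) : c = 0 ∧ ∀ᶠ y in 𝓝 (0 : ℝ), K y = 0 := by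
  have hc : c = 0 := by simpa using h.self_of_nhds
  exact ⟨hc, eventuallyEq_of_pow_mul_eq 1 hK continuous_const (by simpa [hc] using h)⟩

namespace HasCubicJet

variable {f g : ℝ → ℝ} {c₀ c₁ c₂ c₃ d₀ d₁ d₂ d₃ : ℝ}

lemma congr (hf : HasCubicJet f c₀ c₁ c₂ c₃) (hfg : f =ᶠ[𝓝 0] g) : HasCubicJet g c₀ c₁ c₂ c₃ := by
  obtain ⟨R, hR, hfR⟩ := hf
  exact ⟨R, hR, by filter_upwards [hfR, hfg] with y hy hy'; rw [← hy', hy]⟩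

lemma unique (hf : HasCubicJet f c₀ c₁ c₂ c₃) (hf' : HasCubicJet f d₀ d₁ d₂ d₃) :
    c₀ = d₀ ∧ c₁ = d₁ ∧ c₂ = d₂ ∧ c₃ = d₃ := by
  obtain ⟨R, hR, hfR⟩ := hf
  obtain ⟨S, hS, hfS⟩ := hf'
  have h : ∀ᶠ y in 𝓝 (0 : ℝ), (c₀ - d₀) + y * ((c₁ - d₁) + y * ((c₂ - d₂) +
      y * ((c₃ - d₃) + y * (R y - S y)))) = 0 := by
    filter_upwards [hfR, hfS] with y hy hy'
    linear_combination hy' - hy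
  obtain ⟨h₀, h⟩ := eq_zero_and_eventually_eq_zero_of_add_id_mul (by fun_prop) h
  obtain ⟨h₁, h⟩ := eq_zero_and_eventually_eq_zero_of_add_id_mul (by fun_prop) h
  obtain ⟨h₂, h⟩ := eq_zero_and_eventually_eq_zero_of_add_id_mul (by fun_prop) h
  obtain ⟨h₃, -⟩ := eq_zero_and_eventually_eq_zero_of_add_id_mul (by fun_prop) h
  exact ⟨sub_eq_zero.1 h₀, sub_eq_zero.1 h₁, sub_eq_zero.1 h₂, sub_eq_zero.1 h₃⟩

lemma cast (hf : HasCubicJet f c₀ c₁ c₂ c₃) (h₀ : c₀ = d₀) (h₁ : c₁ = d₁) (h₂ : c₂ = d₂)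
    (h₃ : c₃ = d₃) : HasCubicJet f d₀ d₁ d₂ d₃ := by
  subst h₀ h₁ h₂ h₃
  exact hf

lemma of_contDiff (hf : ContDiff ℝ ∞ f) :
    HasCubicJet f (f 0) (iteratedDeriv 1 f 0) (iteratedDeriv 2 f 0 / 2)
      (iteratedDeriv 3 f 0 / 6) := by
  obtain ⟨k, hk, hfk⟩ := exists_contDiff_eq_taylor_add_pow_mul 4 hf
  refine ⟨k, hk, .of_forall fun y => ?_⟩
  rw [hfk y]
  simp [Finset.sum_range_succ, Nat.factorial]

lemma add (hf : HasCubicJet f c₀ c₁ c₂ c₃) (hg : HasCubicJet g d₀ d₁ d₂ d₃) :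
    HasCubicJet (fun y => f y + g y) (c₀ + d₀) (c₁ + d₁) (c₂ + d₂) (c₃ + d₃) := by
  obtain ⟨R, hR, hfR⟩ := hf
  obtain ⟨S, hS, hgS⟩ := hg
  refine ⟨fun y => R y + S y, hR.add hS, ?_⟩
  filter_upwards [hfR, hgS] with y hy hy'
  rw [hy, hy']
  ring

lemma mul (hf : HasCubicJet f c₀ c₁ c₂ c₃) (hg : HasCubicJet g d₀ d₁ d₂ d₃) :
    HasCubicJet (fun y => f y * g y) (c₀ * d₀) (c₀ * d₁ + c₁ * d₀) (c₀ * d₂ + c₁ * d₁ + c₂ * d₀)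
      (c₀ * d₃ + c₁ * d₂ + c₂ * d₁ + c₃ * d₀) := by
  obtain ⟨R, hR, hfR⟩ := hf
  obtain ⟨S, hS, hgS⟩ := hg
  refine ⟨fun y => c₁ * d₃ + c₂ * d₂ + c₃ * d₁ + (c₂ * d₃ + c₃ * d₂) * y + c₃ * d₃ * y ^ 2 +
    (c₀ + c₁ * y + c₂ * y ^ 2 + c₃ * y ^ 3) * S y +
    R y * (d₀ + d₁ * y + d₂ * y ^ 2 + d₃ * y ^ 3 + y ^ 4 * S y), by fun_prop, ?_⟩
  filter_upwards [hfR, hgS] with y hy hy'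
  rw [hy, hy']
  ring

lemma const_mul (hf : HasCubicJet f c₀ c₁ c₂ c₃) (a : ℝ) :
    HasCubicJet (fun y => a * f y) (a * c₀) (a * c₁) (a * c₂) (a * c₃) := by
  obtain ⟨R, hR, hfR⟩ := hf
  refine ⟨fun y => a * R y, by fun_prop, ?_⟩
  filter_upwards [hfR] with y hy
  rw [hy]
  ring

lemma id_mul (hf : HasCubicJet f c₀ c₁ c₂ c₃) : HasCubicJet (fun y => y * f y) 0 c₀ c₁ c₂ := by
  obtain ⟨R, hR, hfR⟩ := hf
  refine ⟨fun y => c₃ + y * R y, by fun_prop, ?_⟩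
  filter_upwards [hfR] with y hy
  rw [hy]
  ring

lemma add_pow_four_mul (hf : HasCubicJet f c₀ c₁ c₂ c₃) {k : ℝ → ℝ} (hk : ContDiff ℝ ∞ k) :
    HasCubicJet (fun y => f y + y ^ 4 * k y) c₀ c₁ c₂ c₃ := by
  obtain ⟨R, hR, hfR⟩ := hf
  refine ⟨fun y => R y + k y, by fun_prop, ?_⟩
  filter_upwards [hfR] with y hy
  rw [hy]
  ring

lemma id_mul_deriv (hf : HasCubicJet f c₀ c₁ c₂ c₃) :
    HasCubicJet (fun y => y * deriv f y) 0 c₁ (2 * c₂) (3 * c₃) := by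
  obtain ⟨R, hR, hfR⟩ := hf
  refine ⟨fun y => 4 * R y + y * deriv R y, by fun_prop, ?_⟩
  filter_upwards [hfR.eventually_nhds] with y hy
  have hpow : HasDerivAt (fun y => c₀ + c₁ * y + c₂ * y ^ 2 + c₃ * y ^ 3 + y ^ 4 * R y)
      (c₁ + c₂ * (2 * y) + c₃ * (3 * y ^ 2) + (4 * y ^ 3 * R y + y ^ 4 * deriv R y)) y := by
    have hRy := (hR.differentiable (by simp) y).hasDerivAt
    refine (((((hasDerivAt_id y).const_mul c₁).const_add c₀).fun_add
      ((hasDerivAt_pow 2 y).const_mul c₂)).fun_add ((hasDerivAt_pow 3 y).const_mul c₃)).fun_add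
      ((hasDerivAt_pow 4 y).fun_mul hRy) |>.congr_deriv ?_
    norm_num
  rw [Filter.EventuallyEq.deriv_eq hy, hpow.deriv]
  ring

lemma comp_id_mul (hf : HasCubicJet f c₀ c₁ c₂ c₃) (hg : HasCubicJet g d₀ d₁ d₂ d₃) :
    HasCubicJet (fun y => f (y * g y)) c₀ (c₁ * d₀) (c₁ * d₁ + c₂ * d₀ ^ 2)
      (c₁ * d₂ + c₂ * (2 * d₀ * d₁) + c₃ * d₀ ^ 3) := by
  obtain ⟨S, hS, hgS⟩ := id hg
  let τ : ℝ → ℝ := fun y => y * (d₀ + d₁ * y + d₂ * y ^ 2 + d₃ * y ^ 3 + y ^ 4 * S y)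
  have hτ : ContDiff ℝ ∞ τ := by fun_prop
  have hτg : ∀ᶠ y in 𝓝 0, τ y = y * g y := hgS.mono fun y hy => by rw [hy]
  have hτ0 : Tendsto τ (𝓝 0) (𝓝 0) := by simpa [τ] using hτ.continuous.tendsto 0
  obtain ⟨R, hR, hfR⟩ := hf
  have h₁ := hg.id_mul
  have h₂ := h₁.mul h₁
  have hpoly := ((h₁.const_mul c₁).add (h₂.const_mul c₂)).add ((h₂.mul h₁).const_mul c₃)
  have hconst : HasCubicJet (fun _ => c₀) c₀ 0 0 0 := ⟨0, contDiff_const, by simp⟩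
  refine HasCubicJet.cast (HasCubicJet.congr ((hconst.add hpoly).add_pow_four_mul
    (k := fun y => (d₀ + d₁ * y + d₂ * y ^ 2 + d₃ * y ^ 3 + y ^ 4 * S y) ^ 4 * R (τ y))
    (by fun_prop)) ?_) (by ring) (by ring) (by ring) (by ring)
  filter_upwards [hτg, hgS, hτ0.eventually hfR] with y hy hg hf
  rw [← hy, hf, ← hg, hy]
  ring

lemma pow {s p q r : ℝ} (hf : HasCubicJet f s (s * p) (s * q) (s * r)) (n : ℕ) :
    HasCubicJet (fun y => f y ^ n) (s ^ n) (s ^ n * (n * p))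
      (s ^ n * (n * q + n * (n - 1) / 2 * p ^ 2))
      (s ^ n * (n * r + n * (n - 1) * p * q + n * (n - 1) * (n - 2) / 6 * p ^ 3)) := by
  induction n with
  | zero => exact ⟨0, contDiff_const, by simp⟩
  | succ n ih =>
    simp only [pow_succ _ n]
    refine (ih.mul hf).cast ?_ ?_ ?_ ?_ <;> push_cast <;> ring

lemma pow_mul_comp {s p q r : ℝ} (hf : HasCubicJet f c₀ c₁ c₂ c₃)
    (hg : HasCubicJet g s (s * p) (s * q) (s * r)) (n : ℕ) :
    HasCubicJet (fun y => g y ^ n * f (y * g y)) (s ^ n * c₀) (s ^ n * (n * p * c₀ + s * c₁))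
      (s ^ n * ((n * q + n * (n - 1) / 2 * p ^ 2) * c₀ + (n + 1) * p * s * c₁ + s ^ 2 * c₂))
      (s ^ n * ((n * r + n * (n - 1) * p * q + n * (n - 1) * (n - 2) / 6 * p ^ 3) * c₀ +
        ((n + 1) * q + n * (n + 1) / 2 * p ^ 2) * s * c₁ + (n + 2) * p * s ^ 2 * c₂ +
        s ^ 3 * c₃)) := by
  refine ((hg.pow n).mul (hf.comp_id_mul hg)).cast ?_ ?_ ?_ ?_ <;> ring

end HasCubicJet

/-! ### Jacobian determinants -/

section Jacobian

variable {f h : ℝ × ℝ → ℝ × ℝ} {p : ℝ × ℝ}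

lemma det_fderiv_eq_jacDet (f : ℝ × ℝ → ℝ × ℝ) (p : ℝ × ℝ) : (fderiv ℝ f p).det = jacDet f p := by
  rw [ContinuousLinearMap.det, ← LinearMap.det_toMatrix (Module.Basis.finTwoProd ℝ),
    Matrix.det_fin_two]
  simp [LinearMap.toMatrix_apply, jacDet, mul_comm]

lemma bijective_fderiv_iff_jacDet_ne_zero :
    Function.Bijective (fderiv ℝ f p) ↔ jacDet f p ≠ 0 := by
  rw [← det_fderiv_eq_jacDet, ContinuousLinearMap.det, ← isUnit_iff_ne_zero,
    ← LinearMap.isUnit_iff_isUnit_det, Module.End.isUnit_iff, ContinuousLinearMap.coe_coe]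

lemma jacDet_comp (hf : DifferentiableAt ℝ f (h p)) (hh : DifferentiableAt ℝ h p) :
    jacDet (fun q => f (h q)) p = jacDet f (h p) * jacDet h p := by
  simp only [← det_fderiv_eq_jacDet]
  rw [fderiv_fun_comp p hf hh]
  exact LinearMap.det_comp _ _

lemma continuous_jacDet (hf : ContDiff ℝ ∞ f) : Continuous (jacDet f) := by
  have hf' := hf.continuous_fderiv (by simp)
  unfold jacDet
  fun_prop

end Jacobian

/-! ### Equivalence of plane curves -/

/-- Smooth functions without constant and linear terms at the origin: the perturbations that keep
a coordinate change tangent to the identity. -/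
def HigherOrder (A : ℝ × ℝ → ℝ) : Prop :=
  ContDiff ℝ ∞ A ∧ A 0 = 0 ∧ fderiv ℝ A 0 = 0

namespace HigherOrder

variable {A B : ℝ × ℝ → ℝ}

lemma hasFDerivAt (hA : HigherOrder A) : HasFDerivAt A (0 : ℝ × ℝ →L[ℝ] ℝ) 0 :=
  hA.2.2 ▸ (hA.1.differentiable (by simp) 0).hasFDerivAt

lemma zero : HigherOrder fun _ => 0 := ⟨contDiff_const, rfl, by simp⟩

lemma add (hA : HigherOrder A) (hB : HigherOrder B) : HigherOrder fun p => A p + B p :=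
  ⟨hA.1.add hB.1, by simp [hA.2.1, hB.2.1],
    by simpa using (hA.hasFDerivAt.fun_add hB.hasFDerivAt).fderiv⟩

lemma mul (hA : ContDiff ℝ ∞ A) (hB : ContDiff ℝ ∞ B) (hA₀ : A 0 = 0) (hB₀ : B 0 = 0) :
    HigherOrder fun p => A p * B p := by
  have hA' := (hA.differentiable (by simp) 0).hasFDerivAt
  have hB' := (hB.differentiable (by simp) 0).hasFDerivAt
  exact ⟨hA.mul hB, by simp [hA₀], by simpa [hA₀, hB₀] using (hA'.fun_mul hB').fderiv⟩

lemma const_mul (hA : HigherOrder A) (s : ℝ) : HigherOrder fun p => s * A p :=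
  ⟨contDiff_const.mul hA.1, by simp [hA.2.1], by simpa using (hA.hasFDerivAt.const_mul s).fderiv⟩

lemma sum {ι : Type*} {A : ι → ℝ × ℝ → ℝ} {s : Finset ι} (hA : ∀ i ∈ s, HigherOrder (A i)) :
    HigherOrder fun p => ∑ i ∈ s, A i p := by
  classical
  induction s using Finset.induction_on with
  | empty => simpa using zero
  | insert i s hi ih =>
    simp only [Finset.sum_insert hi]
    exact (hA i (Finset.mem_insert_self i s)).add
      (ih fun j hj => hA j (Finset.mem_insert_of_mem hj))

lemma mul_monomial {h : ℝ × ℝ → ℝ} (hh : ContDiff ℝ ∞ h) {a b : ℕ} (hab : 2 ≤ a + b) :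
    HigherOrder fun p => h p * (p.1 ^ a * p.2 ^ b) := by
  rcases a with _ | a
  · obtain ⟨b, rfl⟩ := Nat.exists_eq_add_of_le' (show 2 ≤ b by omega)
    convert mul (A := fun p => h p * p.2) (B := fun p => p.2 ^ (b + 1)) (by fun_prop) (by fun_prop)
      (by simp) (by simp) using 2
    ring
  · have hab₀ : (0 : ℝ) ^ a * 0 ^ b = 0 := by rw [← pow_add]; exact zero_pow (by omega)
    convert mul (A := fun p => h p * p.1) (B := fun p => p.1 ^ a * p.2 ^ b) (by fun_prop)
      (by fun_prop) (by simp) (by simpa using hab₀) using 2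
    ring

lemma monomial {a b : ℕ} (hab : 2 ≤ a + b) : HigherOrder fun p => p.1 ^ a * p.2 ^ b := by
  simpa using mul_monomial (h := fun _ => 1) contDiff_const hab

end HigherOrder

/-- Equivalence of germs at `0` of parametrised plane curves under reparametrisation and under
those diffeomorphisms of the target that fix the direction of the first axis, the common tangent
of all the curves considered here. -/
def CurveEquiv (γ γ' : ℝ → ℝ × ℝ) : Prop :=
  ∃ (ψ : ℝ × ℝ → ℝ × ℝ) (τ : ℝ → ℝ), ContDiff ℝ ∞ ψ ∧ ContDiff ℝ ∞ τ ∧ ψ 0 = 0 ∧ τ 0 = 0 ∧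
    Function.Bijective (fderiv ℝ ψ 0) ∧ (fderiv ℝ ψ 0 (1, 0)).2 = 0 ∧ deriv τ 0 ≠ 0 ∧
    ∀ᶠ y in 𝓝 0, ψ (γ (τ y)) = γ' y

namespace CurveEquiv

variable {γ γ' γ'' : ℝ → ℝ × ℝ}

lemma congr_right (h : CurveEquiv γ γ') (hγ : γ' =ᶠ[𝓝 0] γ'') : CurveEquiv γ γ'' := by
  obtain ⟨ψ, τ, hψ, hτ, hψ₀, hτ₀, hbij, htan, hτ', heq⟩ := h
  exact ⟨ψ, τ, hψ, hτ, hψ₀, hτ₀, hbij, htan, hτ', by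
    filter_upwards [heq, hγ] with y h₁ h₂; rw [h₁, h₂]⟩

lemma trans (h : CurveEquiv γ γ') (h' : CurveEquiv γ' γ'') : CurveEquiv γ γ'' := by
  obtain ⟨ψ, τ, hψ, hτ, hψ₀, hτ₀, hbij, htan, hτ', heq⟩ := h
  obtain ⟨χ, σ, hχ, hσ, hχ₀, hσ₀, hbij', htan', hσ', heq'⟩ := h'
  have hD : fderiv ℝ (χ ∘ ψ) 0 = (fderiv ℝ χ 0).comp (fderiv ℝ ψ 0) := by
    rw [fderiv_comp _ (hχ.differentiable (by simp) _) (hψ.differentiable (by simp) 0), hψ₀]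
  have hτσ : deriv (τ ∘ σ) 0 = deriv τ 0 * deriv σ 0 := by
    rw [deriv_comp _ (hτ.differentiable (by simp) _) (hσ.differentiable (by simp) 0), hσ₀]
  have hσ_tendsto : Tendsto σ (𝓝 0) (𝓝 0) := by simpa [hσ₀] using hσ.continuous.tendsto 0
  refine ⟨χ ∘ ψ, τ ∘ σ, hχ.comp hψ, hτ.comp hσ, by simp [hψ₀, hχ₀], by simp [hσ₀, hτ₀],
    by rw [hD]; exact hbij'.comp hbij, ?_, hτσ ▸ mul_ne_zero hτ' hσ', ?_⟩
  · have h₁ : fderiv ℝ ψ 0 (1, 0) = (fderiv ℝ ψ 0 (1, 0)).1 • (1, 0) := by ext <;> simp [htan]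
    rw [hD, ContinuousLinearMap.comp_apply, h₁, map_smul]
    simp [htan']
  · filter_upwards [hσ_tendsto.eventually heq, heq'] with y h₁ h₂
    simp only [Function.comp_apply, h₁, h₂]

lemma of_linear {a b d : ℝ} (ha : a ≠ 0) (hd : d ≠ 0) {τ : ℝ → ℝ} (hτ : ContDiff ℝ ∞ τ)
    (hτ₀ : τ 0 = 0) (hτ' : deriv τ 0 ≠ 0)
    (h : ∀ᶠ y in 𝓝 0, (a * (γ (τ y)).1 + b * (γ (τ y)).2, d * (γ (τ y)).2) = γ' y) :
    CurveEquiv γ γ' := by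
  let L : ℝ × ℝ →L[ℝ] ℝ × ℝ := (a • ContinuousLinearMap.fst ℝ ℝ ℝ +
    b • ContinuousLinearMap.snd ℝ ℝ ℝ).prod (d • ContinuousLinearMap.snd ℝ ℝ ℝ)
  have hL (v : ℝ × ℝ) : L v = (a * v.1 + b * v.2, d * v.2) := by simp [L]
  refine ⟨L, τ, L.contDiff, hτ, map_zero L, hτ₀, ?_, ?_, hτ', by simpa only [hL] using h⟩
  · exact bijective_fderiv_iff_jacDet_ne_zero.2 (by simp [jacDet, L.fderiv, hL, ha, hd])
  · rw [L.fderiv, hL]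
    simp

lemma of_reparam {τ : ℝ → ℝ} (hτ : ContDiff ℝ ∞ τ) (hτ₀ : τ 0 = 0) (hτ' : deriv τ 0 ≠ 0)
    (h : ∀ᶠ y in 𝓝 0, γ (τ y) = γ' y) : CurveEquiv γ γ' :=
  of_linear one_ne_zero one_ne_zero (b := 0) hτ hτ₀ hτ' (by simpa using h)

lemma of_higherOrder {A B : ℝ × ℝ → ℝ} (hA : HigherOrder A) (hB : HigherOrder B)
    (h : ∀ᶠ y in 𝓝 0, ((γ y).1 + A (γ y), (γ y).2 + B (γ y)) = γ' y) : CurveEquiv γ γ' := by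
  have hD := ((hasFDerivAt_fst (𝕜 := ℝ) (p := (0 : ℝ × ℝ))).fun_add hA.hasFDerivAt).prodMk
    (hasFDerivAt_snd.fun_add hB.hasFDerivAt)
  refine ⟨fun p => (p.1 + A p, p.2 + B p), id, ?_, contDiff_id, ?_, rfl, ?_, ?_, by simp, h⟩
  · exact (contDiff_fst.add hA.1).prodMk (contDiff_snd.add hB.1)
  · simp [hA.2.1, hB.2.1]
  · exact bijective_fderiv_iff_jacDet_ne_zero.2 (by simp [jacDet, hD.fderiv])
  · rw [hD.fderiv]
    simp

end CurveEquiv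

section Reparametrisation

lemma hasDerivAt_one_add_pow_mul_comp {W : ℝ → ℝ} (hW : ContDiff ℝ ∞ W) (r : ℕ) (y : ℝ) :
    HasDerivAt (fun w => (1 + w) ^ r * W (y * (1 + w))) (r * W y + y * deriv W y) 0 := by
  have hadd : HasDerivAt (fun w : ℝ => 1 + w) 1 0 := (hasDerivAt_id (0 : ℝ)).const_add 1
  have hWy : HasDerivAt W (deriv W y) (y * (1 + 0)) := by
    simpa using (hW.differentiable (by simp) y).hasDerivAt
  refine ((hadd.fun_pow r).fun_mul (hWy.comp (0 : ℝ) (hadd.const_mul y))).congr_deriv ?_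
  simp
  ring

lemma hasDerivAt_id_mul_one_add_pow_mul {j : ℕ} (hj : j ≠ 0) {ν : ℝ → ℝ} (hν : ContDiff ℝ ∞ ν) :
    HasDerivAt (fun y => y * (1 + y ^ j * ν y)) 1 0 := by
  have hν' := (hν.differentiable (by simp) 0).hasDerivAt
  refine ((hasDerivAt_id (0 : ℝ)).fun_mul
    (((hasDerivAt_pow j (0 : ℝ)).fun_mul hν').const_add 1)).congr_deriv ?_
  simp [hj]

theorem exists_reparam_eq {m j : ℕ} (hm : m ≠ 0) (hj : j ≠ 0) {U k : ℝ → ℝ}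
    (hU : ContDiff ℝ ∞ U) (hk : ContDiff ℝ ∞ k) (hU₀ : U 0 ≠ 0) :
    ∃ ν : ℝ → ℝ, ContDiff ℝ ∞ ν ∧ ∀ᶠ y in 𝓝 0, (1 + y ^ j * ν y) ^ m * U (y * (1 + y ^ j * ν y)) +
      y ^ j * ((1 + y ^ j * ν y) ^ (m + j) * k (y * (1 + y ^ j * ν y))) = U y := by
  obtain ⟨K, hK, hUK, hK₀⟩ := exists_contDiff_eq_add_mul (E := ℝ)
    (F := fun q => (1 + q.2) ^ m * U (q.1 * (1 + q.2))) (by fun_prop)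
  have hK₀₀ : K (0, 0) = m * U 0 := by
    simpa using (hK₀ 0).unique (hasDerivAt_one_add_pow_mul_comp hU m 0)
  have hmU : (m : ℝ) * U 0 ≠ 0 := mul_ne_zero (Nat.cast_ne_zero.2 hm) hU₀
  obtain ⟨ν, hν, -, hνeq, -⟩ := exists_contDiff_implicitFunction (E := ℝ) (p₀ := 0)
    (z₀ := -k 0 / (m * U 0)) (c := m * U 0) (F := fun q => q.2 * K (q.1, q.1 ^ j * q.2) +
      (1 + q.1 ^ j * q.2) ^ (m + j) * k (q.1 * (1 + q.1 ^ j * q.2))) (by fun_prop)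
    (by simp [hj, hK₀₀, div_mul_cancel₀ _ hmU])
    (by simpa [hj, hK₀₀] using ((hasDerivAt_id _).mul_const (m * U 0)).add_const (k 0)) hmU
  refine ⟨ν, hν, ?_⟩
  filter_upwards [hνeq] with y hy
  have hUKy := hUK y (y ^ j * ν y)
  simp only [add_zero, one_pow, one_mul, mul_one] at hUKy
  linear_combination hUKy + y ^ j * hy

/-- The curve `y ↦ (y ^ m * U y, y ^ (m + 1) * V y)` has order `m`, and its tangent at the
parameter `y` has slope `y`. -/
structure SlopeParametrized (m : ℕ) (U V : ℝ → ℝ) : Prop where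
  contDiff_fst : ContDiff ℝ ∞ U
  contDiff_snd : ContDiff ℝ ∞ V
  order_ne_zero : m ≠ 0
  fst_ne_zero : U 0 ≠ 0
  slope_eq : ∀ y, (m + 1 : ℕ) * V y + y * deriv V y = m * U y + y * deriv U y

namespace SlopeParametrized

variable {m : ℕ} {U V : ℝ → ℝ}

lemma snd_ne_zero (h : SlopeParametrized m U V) : V 0 ≠ 0 := by
  intro hV
  have h₀ := h.slope_eq 0
  simp only [hV, mul_zero, zero_mul, add_zero] at h₀
  exact mul_ne_zero (Nat.cast_ne_zero.2 h.order_ne_zero) h.fst_ne_zero h₀.symm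

lemma exists_snd_sub_eq_fst_sub_add (h : SlopeParametrized m U V) :
    ∃ Q : ℝ × ℝ → ℝ, ContDiff ℝ ∞ Q ∧ ∀ y w, (1 + w) ^ (m + 1) * V (y * (1 + w)) - V y =
      (1 + w) ^ m * U (y * (1 + w)) - U y + w ^ 2 * Q (y, w) := by
  have hU := h.contDiff_fst
  have hV := h.contDiff_snd
  obtain ⟨D, Q, -, hQ, hD, hDQ⟩ := exists_contDiff_eq_add_mul_add_sq_mul (E := ℝ)
    (F := fun q => (1 + q.2) ^ (m + 1) * V (q.1 * (1 + q.2)) -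
      (1 + q.2) ^ m * U (q.1 * (1 + q.2))) (by fun_prop)
  refine ⟨Q, hQ, fun y w => ?_⟩
  have hD₀ : D y = 0 := by
    rw [(hD y).unique ((hasDerivAt_one_add_pow_mul_comp hV (m + 1) y).fun_sub
      (hasDerivAt_one_add_pow_mul_comp hU m y)), h.slope_eq, sub_self]
  have hy := hDQ y w
  simp only [hD₀, add_zero, one_pow, one_mul, mul_one, mul_zero] at hy
  linear_combination hy

theorem exists_curveEquiv_add_pow_mul (h : SlopeParametrized m U V) {j : ℕ} (hj : j ≠ 0)
    {k l : ℝ → ℝ} (hk : ContDiff ℝ ∞ k) (hl : ContDiff ℝ ∞ l) :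
    ∃ E : ℝ → ℝ, ContDiff ℝ ∞ E ∧
      CurveEquiv (fun y => (y ^ m * U y + y ^ (m + j) * k y,
          y ^ (m + 1) * V y + y ^ (m + 1 + j) * l y))
        (fun y => (y ^ m * U y,
          y ^ (m + 1) * V y + y ^ (m + 1 + j) * (l y - k y) + y ^ (m + 1 + 2 * j) * E y)) := by
  obtain ⟨ν, hν, hνeq⟩ := exists_reparam_eq h.order_ne_zero hj h.contDiff_fst hk h.fst_ne_zero
  obtain ⟨Q, hQ, hQeq⟩ := h.exists_snd_sub_eq_fst_sub_add
  obtain ⟨K, hK, hKeq, -⟩ := exists_contDiff_eq_add_mul (E := ℝ)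
    (F := fun q => (1 + q.2) ^ (m + j) * k (q.1 * (1 + q.2))) (by fun_prop)
  obtain ⟨L, hL, hLeq, -⟩ := exists_contDiff_eq_add_mul (E := ℝ)
    (F := fun q => (1 + q.2) ^ (m + 1 + j) * l (q.1 * (1 + q.2))) (by fun_prop)
  have hτ' := hasDerivAt_id_mul_one_add_pow_mul hj hν
  refine ⟨fun y => ν y * L (y, y ^ j * ν y) - ν y * K (y, y ^ j * ν y) +
    ν y ^ 2 * Q (y, y ^ j * ν y), by fun_prop,
    CurveEquiv.of_reparam (τ := fun y => y * (1 + y ^ j * ν y)) (by fun_prop) (by simp)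
      (by simp [hτ'.deriv]) ?_⟩
  filter_upwards [hνeq] with y hU
  have hV := hQeq y (y ^ j * ν y)
  have hk := hKeq y (y ^ j * ν y)
  have hl := hLeq y (y ^ j * ν y)
  simp only [add_zero, one_pow, one_mul, mul_one] at hk hl
  ext
  · simp only [mul_pow y]
    linear_combination y ^ m * hU
  · simp only [mul_pow y]
    linear_combination y ^ (m + 1) * hV + y ^ (m + 1) * hU + y ^ (m + 1 + j) * (hl - hk)

end SlopeParametrized

end Reparametrisation

section Elimination

/-- The curve `y ↦ (y ^ m * U y, y ^ (m + 1) * V y)` perturbed by a term of order `n`. -/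
def perturbedCurve (m : ℕ) (U V : ℝ → ℝ) (n : ℕ) (ρ : ℝ → ℝ) (y : ℝ) : ℝ × ℝ :=
  (y ^ m * U y, y ^ (m + 1) * V y + y ^ n * ρ y)

/-- The perturbation of order `n` can be pushed to order `n + 1` by a coordinate change. -/
def CanRaiseOrder (m : ℕ) (U V : ℝ → ℝ) (n : ℕ) : Prop :=
  ∀ ρ, ContDiff ℝ ∞ ρ → ∃ ρ', ContDiff ℝ ∞ ρ' ∧
    CurveEquiv (perturbedCurve m U V n ρ) (perturbedCurve m U V (n + 1) ρ')

variable {m : ℕ} {U V : ℝ → ℝ}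

lemma perturbedCurve_add (j : ℕ) (ρ : ℝ → ℝ) (y : ℝ) : perturbedCurve m U V (m + 1 + j) ρ y =
    (y ^ m * U y, y ^ (m + 1) * (V y + y ^ j * ρ y)) := by
  simp only [perturbedCurve, Prod.mk.injEq, true_and]
  ring

theorem exists_curveEquiv_perturbedCurve_succ (h : SlopeParametrized m U V) {j i : ℕ} (hij : i < j)
    {ρ : ℝ → ℝ} (hρ : ContDiff ℝ ∞ ρ) {A B : ℝ × ℝ → ℝ} (hA : HigherOrder A) (hB : HigherOrder B)
    {k l c : ℝ → ℝ} (hk : ContDiff ℝ ∞ k) (hl : ContDiff ℝ ∞ l) (hc : ContDiff ℝ ∞ c)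
    (hc₀ : c 0 ≠ 0) (hAk : ∀ y, A (perturbedCurve m U V (m + 1 + j + i) ρ y) = y ^ (m + j) * k y)
    (hBl : ∀ y, B (perturbedCurve m U V (m + 1 + j + i) ρ y) = y ^ (m + 1 + j) * l y)
    (hlk : ∀ y, l y - k y = y ^ i * c y) :
    ∃ ρ', ContDiff ℝ ∞ ρ' ∧ CurveEquiv (perturbedCurve m U V (m + 1 + j + i) ρ)
      (perturbedCurve m U V (m + 1 + j + i + 1) ρ') := by
  let s := -ρ 0 / c 0
  obtain ⟨r, hr, hρr⟩ := exists_contDiff_eq_add_id_mul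
    (hρ.add (contDiff_const.mul hc) : ContDiff ℝ ∞ fun y => ρ y + s * c y)
  have hs : ρ 0 + s * c 0 = 0 := by rw [div_mul_cancel₀ _ hc₀, add_neg_cancel]
  simp only [hs, zero_add] at hρr
  obtain ⟨E, hE, hequiv⟩ := h.exists_curveEquiv_add_pow_mul (show j ≠ 0 by omega)
    (contDiff_const.mul hk : ContDiff ℝ ∞ fun y => s * k y)
    (l := fun y => s * l y + y ^ i * ρ y) (by fun_prop)
  obtain ⟨t, rfl⟩ := Nat.exists_eq_add_of_lt hij
  refine ⟨fun y => r y + y ^ t * E y, by fun_prop, CurveEquiv.trans (.of_higherOrder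
    (hA.const_mul s) (hB.const_mul s) (.of_forall fun y => ?_)) (hequiv.congr_right
    (.of_forall fun y => ?_))⟩
  · rw [hAk, hBl, perturbedCurve]
    ext
    · ring
    · ring
  · simp only [perturbedCurve, Prod.mk.injEq, true_and]
    linear_combination (y ^ (m + 1 + (i + t + 1)) * s) * hlk y +
      y ^ (m + 1 + (i + t + 1) + i) * hρr y

lemma canRaiseOrder_of_mem_semigroup (h : SlopeParametrized m U V) {n a b : ℕ} (hn : m + 1 < n)
    (hab : 2 ≤ a + b) (hnab : n = m * a + (m + 1) * b) : CanRaiseOrder m U V n := by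
  intro ρ hρ
  have hU := h.contDiff_fst
  have hV := h.contDiff_snd
  obtain ⟨j, rfl⟩ := Nat.exists_eq_add_of_le hn.le
  have hj : j ≠ 0 := by omega
  refine exists_curveEquiv_perturbedCurve_succ (i := 0) h (by omega) hρ HigherOrder.zero
    (HigherOrder.monomial hab) (k := fun _ => 0) (l := fun y => U y ^ a * (V y + y ^ j * ρ y) ^ b)
    (c := fun y => U y ^ a * (V y + y ^ j * ρ y) ^ b) contDiff_const (by fun_prop) (by fun_prop)
    ?_ (by simp) (fun y => ?_) (by simp)
  · simp [hj, h.fst_ne_zero, h.snd_ne_zero]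
  · rw [add_zero, perturbedCurve_add, hnab, pow_add y (m * a), pow_mul, pow_mul, mul_pow, mul_pow]
    ring

lemma canRaiseOrder_of_pred_eq_mul (h : SlopeParametrized m U V) {q : ℕ} (hq : 2 ≤ q) :
    CanRaiseOrder m U V ((m + 1) * q + 1) := by
  intro ρ hρ
  have hV := h.contDiff_snd
  obtain ⟨r, rfl⟩ := Nat.exists_eq_add_of_le' hq
  obtain ⟨j, hj⟩ : ∃ j, (m + 1) * (r + 2) = m + j := ⟨(m + 1) * (r + 1) + 1, by ring⟩
  have hj₀ : j ≠ 0 := by rintro rfl; nlinarith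
  rw [show (m + 1) * (r + 2) + 1 = m + 1 + j + 0 by omega]
  refine exists_curveEquiv_perturbedCurve_succ h (by omega) hρ
    (HigherOrder.monomial (a := 0) (b := r + 2) (by omega)) HigherOrder.zero
    (k := fun y => (V y + y ^ j * ρ y) ^ (r + 2)) (l := fun _ => 0)
    (c := fun y => -(V y + y ^ j * ρ y) ^ (r + 2)) (by fun_prop) contDiff_const (by fun_prop)
    ?_ (fun y => ?_) (by simp) (by simp)
  · simp [hj₀, h.snd_ne_zero]
  · rw [add_zero, perturbedCurve_add, ← hj, pow_mul, pow_zero, one_mul, mul_pow]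

end Elimination

section Conductor

variable {m : ℕ} {U W ρ : ℝ → ℝ}

lemma exists_reparam_eq_const (hm : m ≠ 0) (hU : ContDiff ℝ ∞ U) (hU₀ : U 0 ≠ 0) :
    ∃ ν : ℝ → ℝ, ContDiff ℝ ∞ ν ∧
      ∀ᶠ t in 𝓝 0, (1 + t * ν t) ^ m * U (t * (1 + t * ν t)) = U 0 := by
  obtain ⟨k, hk, hUk⟩ := exists_contDiff_eq_add_id_mul hU
  obtain ⟨ν, hν, hνeq⟩ := exists_reparam_eq (U := fun _ => U 0) hm one_ne_zero contDiff_const hk hU₀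
  refine ⟨ν, hν, ?_⟩
  filter_upwards [hνeq] with t ht
  simp only [pow_one] at ht
  rw [hUk]
  linear_combination ht

lemma map_nhds_zero_id_mul_one_add_id_mul {ν : ℝ → ℝ} (hν : ContDiff ℝ ∞ ν) :
    map (fun t => t * (1 + t * ν t)) (𝓝 0) = 𝓝 0 := by
  have hθ : ContDiff ℝ ∞ fun t => t * (1 + t * ν t) := by fun_prop
  have hderiv := hasDerivAt_id_mul_one_add_pow_mul one_ne_zero hν
  simp only [pow_one] at hderiv
  have hstrict := hθ.contDiffAt.hasStrictDerivAt' hderiv (by simp)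
  simpa using hstrict.map_nhds_eq one_ne_zero

/-- `m * (m - 1)` is the conductor of the numerical semigroup generated by `m` and `m + 1`. -/
theorem exists_higherOrder_comp_eq (hm : Odd m) (hm₁ : m ≠ 1) (hU : ContDiff ℝ ∞ U)
    (hW : ContDiff ℝ ∞ W) (hρ : ContDiff ℝ ∞ ρ) (hU₀ : U 0 ≠ 0) (hW₀ : W 0 ≠ 0) :
    ∃ T, HigherOrder T ∧
      ∀ᶠ y in 𝓝 0, T (y ^ m * U y, y ^ (m + 1) * W y) = y ^ (m * (m - 1)) * ρ y := by
  obtain ⟨ν, hν, hνU⟩ := exists_reparam_eq_const hm.pos.ne' hU hU₀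
  obtain ⟨h, hh, hsum⟩ := exists_eq_sum_comp_pow_mul hm
    (w := fun i t => ((1 + t * ν t) ^ (m + 1) * W (t * (1 + t * ν t))) ^ i)
    (ρ := fun t => (1 + t * ν t) ^ (m * (m - 1)) * ρ (t * (1 + t * ν t)))
    (fun i => by fun_prop) (fun i => by simp [hW₀]) (fun t => pow_zero _) (by fun_prop)
  refine ⟨fun p => ∑ i ∈ Finset.range m,
    h i (p.1 / U 0) * (U 0 ^ (m - 1 - i))⁻¹ * (p.1 ^ (m - 1 - i) * p.2 ^ i),
    HigherOrder.sum fun i hi => HigherOrder.mul_monomial (by have := hh i; fun_prop) ?_, ?_⟩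
  · have := Finset.mem_range.1 hi
    obtain ⟨r, rfl⟩ := hm
    omega
  rw [← map_nhds_zero_id_mul_one_add_id_mul hν, eventually_map]
  filter_upwards [hνU] with t ht
  rw [mul_pow t, mul_assoc, ht, mul_pow t (1 + t * ν t) (m * (m - 1)), mul_assoc, hsum,
    Finset.mul_sum]
  refine Finset.sum_congr rfl fun i hi => ?_
  have hexp : m * (m - 1) + i = m * (m - 1 - i) + (m + 1) * i := by
    have := Finset.mem_range.1 hi
    obtain ⟨r, rfl⟩ := Nat.exists_eq_add_of_lt this
    simp only [show i + r + 1 - 1 = i + r by omega, show i + r - i = r by omega]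
    ring
  have hpow : t ^ (m * (m - 1)) * t ^ i = (t ^ m) ^ (m - 1 - i) * (t ^ (m + 1)) ^ i := by
    rw [← pow_add, ← pow_mul, ← pow_mul, ← pow_add, hexp]
  rw [mul_div_cancel_right₀ _ hU₀, mul_pow t, mul_pow (t ^ m), mul_assoc (t ^ (m + 1)), mul_pow]
  field_simp
  linear_combination (-h i (t ^ m) *
    ((1 + t * ν t) ^ (m + 1) * W (t * (1 + t * ν t))) ^ i) * hpow

theorem SlopeParametrized.curveEquiv_perturbedCurve_conductor {V : ℝ → ℝ}
    (h : SlopeParametrized m U V) (hm : Odd m) (hm₁ : m ≠ 1) (hρ : ContDiff ℝ ∞ ρ) :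
    CurveEquiv (perturbedCurve m U V (m * (m - 1)) ρ)
      fun y => (y ^ m * U y, y ^ (m + 1) * V y) := by
  obtain ⟨j, hj⟩ : ∃ j, m * (m - 1) = m + 1 + (j + 1) := by
    obtain ⟨r, rfl⟩ := hm
    obtain ⟨r, rfl⟩ := Nat.exists_eq_succ_of_ne_zero (show r ≠ 0 by rintro rfl; exact hm₁ rfl)
    exact ⟨4 * r ^ 2 + 8 * r + 1, by simp only [Nat.succ_eq_add_one, Nat.add_sub_cancel]; ring⟩
  have hV := h.contDiff_snd
  obtain ⟨T, hT, hTeq⟩ := exists_higherOrder_comp_eq (W := fun y => V y + y ^ (j + 1) * ρ y) hm hm₁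
    h.contDiff_fst (by fun_prop) hρ h.fst_ne_zero (by simpa using h.snd_ne_zero)
  refine CurveEquiv.of_higherOrder HigherOrder.zero (hT.const_mul (-1)) ?_
  filter_upwards [hTeq] with y hy
  rw [hj, perturbedCurve_add, hy, hj]
  ext
  · simp
  · ring

end Conductor

/-! ### The curve of order five -/

/-- The first coordinate of the discriminant curve of `(x, x * y + y ^ 6 + ε * y ^ 8 + α * y ^ 9)`,
divided by `y ^ 5`. -/
def normalFst (ε α y : ℝ) : ℝ := -(6 + 8 * ε * y ^ 2 + 9 * α * y ^ 3)

/-- The second coordinate of the discriminant curve of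
`(x, x * y + y ^ 6 + ε * y ^ 8 + α * y ^ 9)`, divided by `y ^ 6`. -/
def normalSnd (ε α y : ℝ) : ℝ := -(5 + 7 * ε * y ^ 2 + 8 * α * y ^ 3)

section NormalCurve

variable (ε α : ℝ)

lemma slopeParametrized_normal : SlopeParametrized 5 (normalFst ε α) (normalSnd ε α) := by
  have hderiv (a b c y : ℝ) : HasDerivAt (fun y => -(a + b * y ^ 2 + c * y ^ 3))
      (-(2 * b * y + 3 * c * y ^ 2)) y :=
    (((((hasDerivAt_pow 2 y).const_mul b).const_add a).fun_add
      ((hasDerivAt_pow 3 y).const_mul c)).fun_neg).congr_deriv (by norm_num; ring)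
  refine ⟨?_, ?_, by norm_num, by norm_num [normalFst], fun y => ?_⟩
  · unfold normalFst
    fun_prop
  · unfold normalSnd
    fun_prop
  · have hU : deriv (normalFst ε α) y = _ := (hderiv 6 (8 * ε) (9 * α) y).deriv
    have hV : deriv (normalSnd ε α) y = _ := (hderiv 5 (7 * ε) (8 * α) y).deriv
    rw [hU, hV, normalFst, normalSnd]
    ring

variable {ε α}

-- `14` is a gap of the semigroup generated by `5` and `6`. The displacement `(X Y, 6 / 5 * Y ^ 2)`
-- is tangent to the curve to leading order, so it acts transversally only at order `14`, through
-- `ε`; for `ε = 0` the displacement `(X ^ 2, 6 / 5 * X Y)` does so through `α`.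
lemma canRaiseOrder_normal_fourteen_of_fst_ne_zero (hε : ε ≠ 0) :
    CanRaiseOrder 5 (normalFst ε α) (normalSnd ε α) 14 := by
  intro ρ hρ
  have h := slopeParametrized_normal ε α
  have hU := h.contDiff_fst
  have hV := h.contDiff_snd
  refine exists_curveEquiv_perturbedCurve_succ (j := 6) (i := 2) h (by norm_num) hρ
    (HigherOrder.monomial (a := 1) (b := 1) le_rfl)
    ((HigherOrder.monomial (a := 0) (b := 2) le_rfl).const_mul (6 / 5))
    (k := fun y => normalFst ε α y * (normalSnd ε α y + y ^ 8 * ρ y))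
    (l := fun y => 6 / 5 * (normalSnd ε α y + y ^ 8 * ρ y) ^ 2)
    (c := fun y => (normalSnd ε α y + y ^ 8 * ρ y) *
      (-(2 / 5) * ε - 3 / 5 * α * y + 6 / 5 * y ^ 6 * ρ y))
    (by fun_prop) (by fun_prop) (by fun_prop) (by simp [normalSnd, hε])
    (fun y => ?_) (fun y => ?_) (fun y => ?_)
  · simp only [perturbedCurve]
    ring
  · simp only [perturbedCurve]
    ring
  · simp only [normalFst, normalSnd]
    ring

lemma canRaiseOrder_normal_fourteen_of_snd_ne_zero (hα : α ≠ 0) :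
    CanRaiseOrder 5 (normalFst 0 α) (normalSnd 0 α) 14 := by
  intro ρ hρ
  have h := slopeParametrized_normal 0 α
  have hU := h.contDiff_fst
  have hV := h.contDiff_snd
  refine exists_curveEquiv_perturbedCurve_succ (j := 5) (i := 3) h (by norm_num) hρ
    (HigherOrder.monomial (a := 2) (b := 0) le_rfl)
    ((HigherOrder.monomial (a := 1) (b := 1) le_rfl).const_mul (6 / 5))
    (k := fun y => normalFst 0 α y ^ 2)
    (l := fun y => 6 / 5 * (normalFst 0 α y * (normalSnd 0 α y + y ^ 8 * ρ y)))
    (c := fun y => normalFst 0 α y * (-(3 / 5) * α + 6 / 5 * y ^ 5 * ρ y))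
    (by fun_prop) (by fun_prop) (by fun_prop) (by simp [normalFst, hα])
    (fun y => ?_) (fun y => ?_) (fun y => ?_)
  · simp only [perturbedCurve]
    ring
  · simp only [perturbedCurve]
    ring
  · simp only [normalFst, normalSnd]
    ring

lemma canRaiseOrder_normal (hne : ε ≠ 0 ∨ α ≠ 0) {n : ℕ} (hn : 10 ≤ n) (hn' : n < 20) :
    CanRaiseOrder 5 (normalFst ε α) (normalSnd ε α) n := by
  have h := slopeParametrized_normal ε α
  have hsemi {n : ℕ} (a b : ℕ) (hn : 6 < n) (hab : 2 ≤ a + b) (hnab : n = 5 * a + 6 * b) :=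
    canRaiseOrder_of_mem_semigroup h hn hab hnab
  interval_cases n
  · exact hsemi 2 0 (by norm_num) (by norm_num) rfl
  · exact hsemi 1 1 (by norm_num) (by norm_num) rfl
  · exact hsemi 0 2 (by norm_num) (by norm_num) rfl
  · exact canRaiseOrder_of_pred_eq_mul h (q := 2) le_rfl
  · rcases eq_or_ne ε 0 with rfl | hε
    · exact canRaiseOrder_normal_fourteen_of_snd_ne_zero (hne.resolve_left (by simp))
    · exact canRaiseOrder_normal_fourteen_of_fst_ne_zero hε
  · exact hsemi 3 0 (by norm_num) (by norm_num) rfl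
  · exact hsemi 2 1 (by norm_num) (by norm_num) rfl
  · exact hsemi 1 2 (by norm_num) (by norm_num) rfl
  · exact hsemi 0 3 (by norm_num) (by norm_num) rfl
  · exact canRaiseOrder_of_pred_eq_mul h (q := 3) (by norm_num)

lemma curveEquiv_perturbedCurve_normal (hne : ε ≠ 0 ∨ α ≠ 0) {n : ℕ} (hn : 10 ≤ n) (hn' : n ≤ 20)
    {ρ : ℝ → ℝ} (hρ : ContDiff ℝ ∞ ρ) :
    CurveEquiv (perturbedCurve 5 (normalFst ε α) (normalSnd ε α) n ρ)
      fun y => (y ^ 5 * normalFst ε α y, y ^ 6 * normalSnd ε α y) := by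
  induction hn' using Nat.decreasingInduction generalizing ρ with
  | self =>
    exact (slopeParametrized_normal ε α).curveEquiv_perturbedCurve_conductor (by decide)
      (by norm_num) hρ
  | of_succ n hn' ih =>
    obtain ⟨ρ', hρ', hequiv⟩ := canRaiseOrder_normal hne hn hn' ρ hρ
    exact hequiv.trans (ih (by omega) hρ')

theorem curveEquiv_normal_add_pow_mul (hne : ε ≠ 0 ∨ α ≠ 0) {k l : ℝ → ℝ} (hk : ContDiff ℝ ∞ k)
    (hl : ContDiff ℝ ∞ l) :
    CurveEquiv (fun y => (y ^ 5 * normalFst ε α y + y ^ 9 * k y,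
        y ^ 6 * normalSnd ε α y + y ^ 10 * l y))
      fun y => (y ^ 5 * normalFst ε α y, y ^ 6 * normalSnd ε α y) := by
  obtain ⟨E, hE, hequiv⟩ :=
    (slopeParametrized_normal ε α).exists_curveEquiv_add_pow_mul (j := 4) (by norm_num) hk hl
  refine (hequiv.congr_right (.of_forall fun y => ?_)).trans <|
    curveEquiv_perturbedCurve_normal (ρ := fun y => l y - k y + y ^ 4 * E y) hne le_rfl
      (by norm_num) (by fun_prop)
  simp only [perturbedCurve, Prod.mk.injEq, true_and]
  ring

end NormalCurve

/-- The components of the germ `γ`, divided by `y ^ 5` and `y ^ 6`, have the same cubic jets as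
those of the discriminant curve of `(x, x * y + y ^ 6 + a₇ * y ^ 7 + a₈ * y ^ 8 + a₉ * y ^ 9)`. -/
def HasDiscriminantJet (γ : ℝ → ℝ × ℝ) (a₇ a₈ a₉ : ℝ) : Prop :=
  ∃ U V : ℝ → ℝ, ContDiff ℝ ∞ U ∧ ContDiff ℝ ∞ V ∧
    HasCubicJet U (-6) (-(7 * a₇)) (-(8 * a₈)) (-(9 * a₉)) ∧
    HasCubicJet V (-5) (-(6 * a₇)) (-(7 * a₈)) (-(8 * a₉)) ∧
    ∀ᶠ y in 𝓝 0, γ y = (y ^ 5 * U y, y ^ 6 * V y)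

namespace HasDiscriminantJet

variable {γ : ℝ → ℝ × ℝ} {a₇ a₈ a₉ ε α : ℝ}

theorem exists_curveEquiv_normalised (h : HasDiscriminantJet γ a₇ a₈ a₉) {s : ℝ} (hs : s ≠ 0) :
    ∃ γ', CurveEquiv γ γ' ∧ HasDiscriminantJet γ' 0 (s ^ 2 * (a₈ - 3 / 5 * a₇ ^ 2))
      (s ^ 3 * (a₉ - 7 / 5 * a₇ * a₈ + 14 / 25 * a₇ ^ 3)) := by
  obtain ⟨U, V, hU_smooth, hV_smooth, hU, hV, hγ⟩ := h
  obtain ⟨β, rfl⟩ : ∃ β, a₇ = -5 * β / s := ⟨-(a₇ * s / 5), by field_simp⟩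
  let T : ℝ → ℝ := fun y => s + s * β * y + s * β ^ 2 * y ^ 2 + s * β ^ 3 * y ^ 3
  have hT : HasCubicJet T s (s * β) (s * β ^ 2) (s * β ^ 3) := ⟨0, contDiff_const, by simp [T]⟩
  have hT' : HasDerivAt (fun y => y * T y) s 0 := by
    have hd : DifferentiableAt ℝ T 0 := by fun_prop
    exact ((hasDerivAt_id 0).fun_mul hd.hasDerivAt).congr_deriv (by simp [T])
  have hUT := hU.pow_mul_comp hT 5
  have hVT := hV.pow_mul_comp hT 6
  refine ⟨fun y => (y ^ 5 * ((s ^ 5)⁻¹ * (T y ^ 5 * U (y * T y)) +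
      β * (s ^ 6)⁻¹ * (y * (T y ^ 6 * V (y * T y)))),
      y ^ 6 * ((s ^ 6)⁻¹ * (T y ^ 6 * V (y * T y)))),
    .of_linear (a := (s ^ 5)⁻¹) (b := β * (s ^ 6)⁻¹) (d := (s ^ 6)⁻¹) (τ := fun y => y * T y)
      (by positivity) (by positivity) (by fun_prop) (by simp) (hT'.deriv.symm ▸ hs) ?_,
    _, _, by fun_prop, by fun_prop,
    ((hUT.const_mul _).add (hVT.id_mul.const_mul _)).cast ?_ ?_ ?_ ?_,
    (hVT.const_mul _).cast ?_ ?_ ?_ ?_, .of_forall fun y => rfl⟩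
  · have htend : Tendsto (fun y => y * T y) (𝓝 0) (𝓝 0) := by
      simpa using hT'.continuousAt.tendsto
    filter_upwards [htend.eventually hγ] with y hy
    rw [hy]
    ext
    · ring
    · ring
  all_goals
    push_cast
    field_simp <;> ring

lemma curveEquiv_normal_of_eq_zero (h : HasDiscriminantJet γ 0 ε α) (hne : ε ≠ 0 ∨ α ≠ 0) :
    CurveEquiv γ fun y => (y ^ 5 * normalFst ε α y, y ^ 6 * normalSnd ε α y) := by
  obtain ⟨U, V, -, -, ⟨k, hk, hU⟩, ⟨l, hl, hV⟩, hγ⟩ := h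
  refine CurveEquiv.trans (.of_reparam contDiff_id rfl (by simp) ?_)
    (curveEquiv_normal_add_pow_mul hne hk hl)
  filter_upwards [hU, hV, hγ] with y hy hy' hγy
  rw [id, hγy, hy, hy', normalFst, normalSnd]
  ext
  · ring
  · ring

theorem curveEquiv_normal (h : HasDiscriminantJet γ a₇ a₈ a₉) {s : ℝ} (hs : s ≠ 0)
    (hε : ε = s ^ 2 * (a₈ - 3 / 5 * a₇ ^ 2))
    (hα : α = s ^ 3 * (a₉ - 7 / 5 * a₇ * a₈ + 14 / 25 * a₇ ^ 3)) (hne : ε ≠ 0 ∨ α ≠ 0) :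
    CurveEquiv γ fun y => (y ^ 5 * normalFst ε α y, y ^ 6 * normalSnd ε α y) := by
  obtain ⟨γ', hγ', hjet⟩ := h.exists_curveEquiv_normalised hs
  rw [← hε, ← hα] at hjet
  exact hγ'.trans (hjet.curveEquiv_normal_of_eq_zero hne)

end HasDiscriminantJet

/-! ### Critical curves of map germs `(x, g (x, y))` -/

section PartialDerivatives

variable {g : ℝ × ℝ → ℝ}

lemma contDiff_pdx (hg : ContDiff ℝ ∞ g) : ContDiff ℝ ∞ (pdx g) :=
  (hg.fderiv_right (m := ∞) (by simp)).clm_apply contDiff_const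

lemma contDiff_pdy (hg : ContDiff ℝ ∞ g) : ContDiff ℝ ∞ (pdy g) :=
  (hg.fderiv_right (m := ∞) (by simp)).clm_apply contDiff_const

lemma fderiv_apply_eq_pdx_add_pdy (g : ℝ × ℝ → ℝ) (p v : ℝ × ℝ) :
    fderiv ℝ g p v = v.1 * pdx g p + v.2 * pdy g p := by
  have hv : v = v.1 • (1, 0) + v.2 • (0, 1) := by simp
  rw [hv, map_add, map_smul, map_smul]
  simp [pdx, pdy, dop]

lemma hasDerivAt_comp_prodMk (hg : ContDiff ℝ ∞ g) {a b : ℝ → ℝ} {a' b' w : ℝ}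
    (ha : HasDerivAt a a' w) (hb : HasDerivAt b b' w) :
    HasDerivAt (fun w => g (a w, b w)) (a' * pdx g (a w, b w) + b' * pdy g (a w, b w)) w := by
  have hgw := (hg.differentiable (by simp) (a w, b w)).hasFDerivAt
  exact (hgw.comp_hasDerivAt w (ha.prodMk hb)).congr_deriv (fderiv_apply_eq_pdx_add_pdy _ _ _)

lemma hasDerivAt_pdx (hg : ContDiff ℝ ∞ g) (x y : ℝ) :
    HasDerivAt (fun x => g (x, y)) (pdx g (x, y)) x := by
  simpa using hasDerivAt_comp_prodMk hg (hasDerivAt_id x) (hasDerivAt_const x y)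

lemma hasDerivAt_pdy (hg : ContDiff ℝ ∞ g) (x y : ℝ) :
    HasDerivAt (fun y => g (x, y)) (pdy g (x, y)) y := by
  simpa using hasDerivAt_comp_prodMk hg (hasDerivAt_const y x) (hasDerivAt_id y)

lemma pdy_pdx_comm (hg : ContDiff ℝ ∞ g) : pdy (pdx g) = pdx (pdy g) := by
  funext p
  have hd : DifferentiableAt ℝ (fderiv ℝ g) p :=
    (hg.fderiv_right (m := ∞) (by simp)).differentiable (by simp) p
  have happly (v w : ℝ × ℝ) :
      fderiv ℝ (fun q => fderiv ℝ g q v) p w = fderiv ℝ (fderiv ℝ g) p w v := by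
    rw [fderiv_clm_apply hd (differentiableAt_const v)]
    simp
  have hsymm : IsSymmSndFDerivAt ℝ g p := hg.contDiffAt.isSymmSndFDerivAt
    (by simpa using ENat.LEInfty.out)
  exact (happly _ _).trans ((hsymm _ _).trans (happly _ _).symm)

lemma contDiff_iterate_pdy (hg : ContDiff ℝ ∞ g) (j : ℕ) : ContDiff ℝ ∞ (pdy^[j] g) := by
  induction j with
  | zero => exact hg
  | succ j ih =>
    rw [Function.iterate_succ_apply']
    exact contDiff_pdy ih

lemma iterate_pdy_pdx_comm (hg : ContDiff ℝ ∞ g) (j : ℕ) :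
    pdy^[j] (pdx g) = pdx (pdy^[j] g) := by
  induction j with
  | zero => rfl
  | succ j ih =>
    rw [Function.iterate_succ_apply', ih, pdy_pdx_comm (contDiff_iterate_pdy hg j),
      Function.iterate_succ_apply']

lemma iteratedDeriv_eq_iterate_pdy (hg : ContDiff ℝ ∞ g) (x : ℝ) (j : ℕ) :
    iteratedDeriv j (fun y => g (x, y)) = fun y => (pdy^[j] g) (x, y) := by
  induction j generalizing g with
  | zero => rfl
  | succ j ih =>
    have hderiv : deriv (fun y => g (x, y)) = fun y => pdy g (x, y) :=
      funext fun y => (hasDerivAt_pdy hg x y).deriv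
    rw [iteratedDeriv_succ', hderiv, ih (contDiff_pdy hg), Function.iterate_succ_apply]

lemma tcoeff_zero_eq_iteratedDeriv (hg : ContDiff ℝ ∞ g) (j : ℕ) :
    tcoeff g 0 j = iteratedDeriv j (fun y => g (0, y)) 0 / j.factorial := by
  rw [iteratedDeriv_eq_iterate_pdy hg]
  simp [tcoeff, Prod.zero_eq_mk]

lemma tcoeff_one_eq_iteratedDeriv (hg : ContDiff ℝ ∞ g) (j : ℕ) :
    tcoeff g 1 j = iteratedDeriv j (fun y => pdx g (0, y)) 0 / j.factorial := by
  rw [iteratedDeriv_eq_iterate_pdy (contDiff_pdx hg), iterate_pdy_pdx_comm hg]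
  simp [tcoeff, Prod.zero_eq_mk]

end PartialDerivatives

/-- The germ at `0` of the critical set `∂g/∂y = 0` of `(x, g (x, y))` is the curve `x = σ y`. -/
structure IsCriticalCurve (g : ℝ × ℝ → ℝ) (σ : ℝ → ℝ) : Prop where
  contDiff : ContDiff ℝ ∞ σ
  map_zero : σ 0 = 0
  pdy_eq_zero : ∀ᶠ y in 𝓝 0, pdy g (σ y, y) = 0
  eq_of_pdy_eq_zero : ∀ᶠ p in 𝓝 (0 : ℝ × ℝ), pdy g p = 0 → p.1 = σ p.2

/-- The critical values of `(x, g (x, y))` along the critical curve `x = σ y`. -/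
def discriminantCurve (g : ℝ × ℝ → ℝ) (σ : ℝ → ℝ) (y : ℝ) : ℝ × ℝ := (σ y, g (σ y, y))

section CriticalCurve

variable {g : ℝ × ℝ → ℝ}

theorem IsCriticalCurve.of_pdx_pdy_ne_zero (hg : ContDiff ℝ ∞ g) (hxy : pdx (pdy g) 0 ≠ 0)
    {σ : ℝ → ℝ} (hσ : ContDiff ℝ ∞ σ) (hσ₀ : σ 0 = 0)
    (hcrit : ∀ᶠ y in 𝓝 0, pdy g (σ y, y) = 0) : IsCriticalCurve g σ := by
  have hgy := contDiff_pdy hg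
  obtain ⟨z, -, -, -, hz⟩ := exists_contDiff_implicitFunction (E := ℝ) (p₀ := 0) (z₀ := 0)
    (F := fun q => pdy g (q.2, q.1)) (by fun_prop) (by simpa [hσ₀] using hcrit.self_of_nhds)
    (hasDerivAt_pdx hgy 0 0) hxy
  have hswap : Tendsto (fun p : ℝ × ℝ => (p.2, p.1)) (𝓝 0) (𝓝 ((0 : ℝ), (0 : ℝ))) :=
    (by fun_prop : Continuous fun p : ℝ × ℝ => (p.2, p.1)).tendsto 0
  have hgraph : Tendsto (fun y => (y, σ y)) (𝓝 0) (𝓝 ((0 : ℝ), (0 : ℝ))) := by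
    have hcont : Continuous fun y => (y, σ y) := by fun_prop
    simpa [hσ₀] using hcont.tendsto 0
  have hzσ : ∀ᶠ y in 𝓝 0, z y = σ y := by
    filter_upwards [hgraph.eventually hz, hcrit] with y h₁ h₂ using h₁ h₂
  refine ⟨hσ, hσ₀, hcrit, ?_⟩
  filter_upwards [hswap.eventually hz, (continuous_snd.tendsto (0 : ℝ × ℝ)).eventually hzσ]
    with p h₁ h₂ h₃
  rw [← h₂, h₁ h₃]

variable {a₇ a₈ a₉ : ℝ}

lemma exists_eq_of_tcoeff (hg : ContDiff ℝ ∞ g) (hP : ∀ i j, i + j < 7 →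
    tcoeff g i j = if (i, j) = (1, 1) ∨ (i, j) = (0, 6) then 1 else 0) :
    ∃ (C r : ℝ → ℝ) (K : ℝ × ℝ → ℝ), ContDiff ℝ ∞ C ∧ ContDiff ℝ ∞ r ∧ ContDiff ℝ ∞ K ∧
      HasCubicJet C 1 (tcoeff g 0 7) (tcoeff g 0 8) (tcoeff g 0 9) ∧
      ∀ x y, g (x, y) = y ^ 6 * C y + x * (y + y ^ 6 * r y) + x ^ 2 * K (y, x) := by
  obtain ⟨D, K, hD, hK, hDx, hgK⟩ := exists_contDiff_eq_add_mul_add_sq_mul (E := ℝ)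
    (F := fun q => g (q.2, q.1)) (by fun_prop)
  obtain rfl : D = fun y => pdx g (0, y) :=
    funext fun y => (hDx y).unique (hasDerivAt_pdx hg 0 y)
  obtain ⟨R, hR, hgR⟩ := exists_contDiff_eq_taylor_add_pow_mul 10 (h := fun y => g (0, y))
    (by fun_prop)
  obtain ⟨r, hr, hDr⟩ := exists_contDiff_eq_taylor_add_pow_mul 6 hD
  simp only [← tcoeff_zero_eq_iteratedDeriv hg, Finset.sum_range_succ, Finset.sum_range_zero] at hgR
  simp only [← tcoeff_one_eq_iteratedDeriv hg, Finset.sum_range_succ, Finset.sum_range_zero] at hDr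
  refine ⟨fun y => 1 + tcoeff g 0 7 * y + tcoeff g 0 8 * y ^ 2 + tcoeff g 0 9 * y ^ 3 +
    y ^ 4 * R y, r, K, by fun_prop, hr, hK, ⟨R, hR, .of_forall fun y => rfl⟩, fun x y => ?_⟩
  have hg₀ : g (0, y) = y ^ 6 + tcoeff g 0 7 * y ^ 7 + tcoeff g 0 8 * y ^ 8 +
      tcoeff g 0 9 * y ^ 9 + y ^ 10 * R y := by simpa [hP] using hgR y
  have hg₁ : pdx g (0, y) = y + y ^ 6 * r y := by simpa [hP] using hDr y
  linear_combination hgK y x + hg₀ + x * hg₁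

lemma pdy_eq_of_eq_pow_mul_add {C r : ℝ → ℝ} {K : ℝ × ℝ → ℝ} (hg : ContDiff ℝ ∞ g)
    (hC : ContDiff ℝ ∞ C) (hr : ContDiff ℝ ∞ r) (hK : ContDiff ℝ ∞ K)
    (hgeq : ∀ x y, g (x, y) = y ^ 6 * C y + x * (y + y ^ 6 * r y) + x ^ 2 * K (y, x)) (x y : ℝ) :
    pdy g (x, y) = y ^ 5 * (6 * C y + y * deriv C y) +
      x * (1 + y ^ 5 * (6 * r y + y * deriv r y)) + x ^ 2 * pdx K (y, x) := by
  have hCy := (hC.differentiable (by simp) y).hasDerivAt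
  have hry := (hr.differentiable (by simp) y).hasDerivAt
  have hpow := hasDerivAt_pow 6 y
  refine (hasDerivAt_pdy hg x y).unique <| (funext (hgeq x) ▸
    (((hpow.fun_mul hCy).fun_add
      (((hasDerivAt_id y).fun_add (hpow.fun_mul hry)).const_mul x)).fun_add
        ((hasDerivAt_pdx hK y x).const_mul (x ^ 2)))).congr_deriv ?_
  norm_num
  ring

theorem exists_isCriticalCurve_hasDiscriminantJet (hg : ContDiff ℝ ∞ g) (hP : ∀ i j, i + j < 7 →
    tcoeff g i j = if (i, j) = (1, 1) ∨ (i, j) = (0, 6) then 1 else 0) :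
    ∃ σ, IsCriticalCurve g σ ∧ HasDiscriminantJet (discriminantCurve g σ)
      (tcoeff g 0 7) (tcoeff g 0 8) (tcoeff g 0 9) := by
  obtain ⟨C, r, K, hC, hr, hK, hCjet, hgeq⟩ := exists_eq_of_tcoeff hg hP
  have hC' : ContDiff ℝ ∞ (deriv C) := (contDiff_infty_iff_deriv.1 hC).2
  have hr' : ContDiff ℝ ∞ (deriv r) := (contDiff_infty_iff_deriv.1 hr).2
  have hKx := contDiff_pdx hK
  obtain ⟨s, hs, -, hseq, -⟩ := exists_contDiff_implicitFunction (E := ℝ) (p₀ := 0) (c := 1)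
    (z₀ := -(6 * C 0)) (F := fun q => 6 * C q.1 + q.1 * deriv C q.1 +
      q.2 * (1 + q.1 ^ 5 * (6 * r q.1 + q.1 * deriv r q.1)) +
      q.1 ^ 5 * q.2 ^ 2 * pdx K (q.1, q.1 ^ 5 * q.2)) (by fun_prop) (by simp)
    (by simpa using (hasDerivAt_id (-(6 * C 0))).const_add (6 * C 0)) one_ne_zero
  have hsjet : HasCubicJet s (-6) (-(7 * tcoeff g 0 7)) (-(8 * tcoeff g 0 8))
      (-(9 * tcoeff g 0 9)) := by
    refine ((((hCjet.const_mul (-6)).add (hCjet.id_mul_deriv.const_mul (-1))).add_pow_four_mul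
      (k := fun y => -(y * s y * (6 * r y + y * deriv r y) +
        y * s y ^ 2 * pdx K (y, y ^ 5 * s y))) (by fun_prop)).congr ?_).cast ?_ ?_ ?_ ?_
    · filter_upwards [hseq] with y hy
      linear_combination -hy
    all_goals ring
  refine ⟨fun y => y ^ 5 * s y, .of_pdx_pdy_ne_zero hg ?_ (by fun_prop) (by simp) ?_, s,
    fun y => C y + s y + y ^ 4 * (y * s y * r y + s y ^ 2 * K (y, y ^ 5 * s y)), hs, by fun_prop,
    hsjet, ?_, ?_⟩
  · have h₁₁ : pdx (pdy g) 0 = 1 := by simpa [tcoeff] using hP 1 1 (by norm_num)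
    exact h₁₁ ▸ one_ne_zero
  · filter_upwards [hseq] with y hy
    rw [pdy_eq_of_eq_pow_mul_add hg hC hr hK hgeq]
    linear_combination y ^ 5 * hy
  · refine ((hCjet.add hsjet).add_pow_four_mul (by fun_prop)).cast ?_ ?_ ?_ ?_ <;> ring
  · refine .of_forall fun y => Prod.ext rfl ?_
    rw [discriminantCurve, hgeq]
    ring

end CriticalCurve

/-! ### Lifting equivalences of discriminant curves -/

section AEquiv

variable {f f' f'' : ℝ × ℝ → ℝ × ℝ} {g u v : ℝ × ℝ → ℝ} {p : ℝ × ℝ}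

lemma AEquiv.trans (h : AEquiv f f') (h' : AEquiv f' f'') : AEquiv f f'' := by
  obtain ⟨φ, ψ, hφ, hψ, hφ₀, hψ₀, hφbij, hψbij, heq⟩ := h
  obtain ⟨φ', ψ', hφ', hψ', hφ₀', hψ₀', hφbij', hψbij', heq'⟩ := h'
  have hDφ : fderiv ℝ (φ ∘ φ') 0 = (fderiv ℝ φ 0).comp (fderiv ℝ φ' 0) := by
    rw [fderiv_comp _ (hφ.differentiable (by simp) _) (hφ'.differentiable (by simp) 0), hφ₀']
  have hDψ : fderiv ℝ (ψ' ∘ ψ) 0 = (fderiv ℝ ψ' 0).comp (fderiv ℝ ψ 0) := by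
    rw [fderiv_comp _ (hψ'.differentiable (by simp) _) (hψ.differentiable (by simp) 0), hψ₀]
  have hφ'_tendsto : Tendsto φ' (𝓝 0) (𝓝 0) := by simpa [hφ₀'] using hφ'.continuous.tendsto 0
  refine ⟨φ ∘ φ', ψ' ∘ ψ, hφ.comp hφ', hψ'.comp hψ, by simp [hφ₀', hφ₀], by simp [hψ₀, hψ₀'],
    hDφ ▸ hφbij.comp hφbij', hDψ ▸ hψbij'.comp hψbij, ?_⟩
  filter_upwards [hφ'_tendsto.eventually heq, heq'] with p h₁ h₂
  simp only [Function.comp_apply, h₁, h₂]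

lemma jacDet_prodMk (hu : ContDiff ℝ ∞ u) (hv : ContDiff ℝ ∞ v) :
    jacDet (fun q => (u q, v q)) p = pdx u p * pdy v p - pdx v p * pdy u p := by
  have hD := (hu.differentiable (by simp) p).hasFDerivAt.prodMk
    (hv.differentiable (by simp) p).hasFDerivAt
  simp [jacDet, hD.fderiv, pdx, pdy, dop]

lemma jacDet_fst_prodMk (hg : ContDiff ℝ ∞ g) : jacDet (fun q => (q.1, g q)) p = pdy g p := by
  rw [jacDet_prodMk contDiff_fst hg]
  simp [pdx, pdy, dop, fderiv_fst]

lemma eventually_pdy_eq_zero_iff {G : ℝ × ℝ → ℝ} {φ ψ : ℝ × ℝ → ℝ × ℝ} (hg : ContDiff ℝ ∞ g)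
    (hg₀ : g 0 = 0) (hG : ContDiff ℝ ∞ G) (hφ : ContDiff ℝ ∞ φ) (hψ : ContDiff ℝ ∞ ψ)
    (hφ₀ : φ 0 = 0) (hφbij : Function.Bijective (fderiv ℝ φ 0))
    (hψbij : Function.Bijective (fderiv ℝ ψ 0))
    (h : ∀ᶠ p in 𝓝 0, ψ ((φ p).1, g (φ p)) = (p.1, G p)) :
    ∀ᶠ p in 𝓝 0, pdy G p = 0 ↔ pdy g (φ p) = 0 := by
  have hφne : ∀ᶠ p in 𝓝 0, jacDet φ p ≠ 0 := (continuous_jacDet hφ).continuousAt.eventually_ne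
    (bijective_fderiv_iff_jacDet_ne_zero.1 hφbij)
  have hψne : ∀ᶠ p in 𝓝 0, jacDet ψ ((φ p).1, g (φ p)) ≠ 0 := by
    have hcont : Continuous fun p => jacDet ψ ((φ p).1, g (φ p)) :=
      (continuous_jacDet hψ).comp (by fun_prop)
    refine hcont.continuousAt.eventually_ne ?_
    simpa [hφ₀, hg₀, Prod.mk_zero_zero] using bijective_fderiv_iff_jacDet_ne_zero.1 hψbij
  filter_upwards [hφne, hψne, h.eventually_nhds] with p h₁ h₂ h₃
  have hgraph : DifferentiableAt ℝ (fun q : ℝ × ℝ => (q.1, g q)) (φ p) :=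
    (contDiff_fst.prodMk hg).differentiable (by simp) _
  have hφp := hφ.differentiable (by simp) p
  have hjac : pdy G p = jacDet ψ ((φ p).1, g (φ p)) * (pdy g (φ p) * jacDet φ p) := by
    rw [← jacDet_fst_prodMk hg, ← jacDet_fst_prodMk hG, ← jacDet_comp hgraph hφp,
      ← jacDet_comp (h := fun q => ((φ q).1, g (φ q))) (hψ.differentiable (by simp) _)
        (hgraph.comp p hφp), jacDet, jacDet, Filter.EventuallyEq.fderiv_eq h₃]
  simp [hjac, h₁, h₂]

end AEquiv

section Lift

variable {g : ℝ × ℝ → ℝ} {σ a b N : ℝ → ℝ}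

lemma exists_straightening {A : ℝ × ℝ → ℝ} (hA : ContDiff ℝ ∞ A) (hA₀ : A 0 = 0)
    (hAx : pdx A 0 ≠ 0) :
    ∃ χ : ℝ × ℝ → ℝ, ContDiff ℝ ∞ χ ∧ χ 0 = 0 ∧ pdx χ 0 ≠ 0 ∧
      (∀ᶠ p in 𝓝 0, A (χ p, p.2) = p.1) ∧ ∀ᶠ p in 𝓝 0, χ (A p, p.2) = p.1 := by
  obtain ⟨χ, hχ, hχ₀, hAχ, huniq⟩ := exists_contDiff_implicitFunction (E := ℝ × ℝ) (p₀ := 0)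
    (z₀ := 0) (F := fun q => A (q.2, q.1.2) - q.1.1) (by fun_prop)
    (by simpa [Prod.mk_zero_zero] using hA₀)
    ((hasDerivAt_pdx hA 0 0).sub_const 0) hAx
  have htendsto : Tendsto (fun p : ℝ × ℝ => ((A p, p.2), p.1)) (𝓝 0) (𝓝 (0, 0)) :=
    Continuous.tendsto' (by fun_prop) _ _ (by simp [hA₀])
  have hχA : ∀ᶠ p in 𝓝 0, χ (A p, p.2) = p.1 := by
    filter_upwards [htendsto.eventually huniq] with p hp using hp (sub_self _)
  refine ⟨χ, hχ, hχ₀, fun hχx => ?_, hAχ.mono fun p hp => sub_eq_zero.1 hp, hχA⟩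
  have haxis : Tendsto (fun x : ℝ => (x, (0 : ℝ))) (𝓝 0) (𝓝 0) :=
    Continuous.tendsto' (by fun_prop) _ _ rfl
  have hderiv : HasDerivAt (fun x => χ (A (x, 0), 0)) 0 0 := by
    simpa [hA₀, hχx, ← Prod.zero_eq_mk] using
      hasDerivAt_comp_prodMk hχ (hasDerivAt_pdx hA 0 0) (hasDerivAt_const (0 : ℝ) (0 : ℝ))
  exact zero_ne_one (hderiv.unique <|
    (hasDerivAt_id (0 : ℝ)).congr_of_eventuallyEq (haxis.eventually hχA))

lemma hasDerivAt_comp_graph {ψ : ℝ × ℝ → ℝ × ℝ} (hψ : ContDiff ℝ ∞ ψ) (hg : ContDiff ℝ ∞ g)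
    {u v : ℝ → ℝ} {u' v' w : ℝ} (hu : HasDerivAt u u' w) (hv : HasDerivAt v v' w) :
    HasDerivAt (fun w => ψ (u w, g (u w, v w))) (fderiv ℝ ψ (u w, g (u w, v w))
      (u', u' * pdx g (u w, v w) + v' * pdy g (u w, v w))) w :=
  (hψ.differentiable (by simp) _).hasFDerivAt.comp_hasDerivAt w
    (hu.prodMk (hasDerivAt_comp_prodMk hg hu hv))

lemma pdx_fst_comp_graph_ne_zero {ψ : ℝ × ℝ → ℝ × ℝ} (hψ : ContDiff ℝ ∞ ψ)
    (hg : ContDiff ℝ ∞ g) (hg₀ : g 0 = 0) (hgx : pdx g 0 = 0)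
    (hψbij : Function.Bijective (fderiv ℝ ψ 0)) (htan : (fderiv ℝ ψ 0 (1, 0)).2 = 0) :
    pdx (fun p => (ψ (p.1, g p)).1) 0 ≠ 0 := by
  have hψ₁ : (fderiv ℝ ψ 0 (1, 0)).1 ≠ 0 := by
    have hdet := bijective_fderiv_iff_jacDet_ne_zero.1 hψbij
    rw [jacDet, htan, zero_mul, sub_zero] at hdet
    exact left_ne_zero_of_mul hdet
  have hsmooth : ContDiff ℝ ∞ fun p => (ψ (p.1, g p)).1 := (hψ.comp (contDiff_fst.prodMk hg)).fst
  have hderiv := (hasDerivAt_comp_graph hψ hg (hasDerivAt_id 0) (hasDerivAt_const 0 0)).fst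
  simp only [id, Prod.mk_zero_zero, hg₀, hgx, mul_zero, zero_mul, add_zero] at hderiv
  exact (hasDerivAt_pdx hsmooth 0 0).unique hderiv ▸ hψ₁

lemma exists_source_diffeomorphism {ψ : ℝ × ℝ → ℝ × ℝ} {τ : ℝ → ℝ} (hg : ContDiff ℝ ∞ g)
    (hg₀ : g 0 = 0) (hgx : pdx g 0 = 0) (hψ : ContDiff ℝ ∞ ψ) (hψ₀ : ψ 0 = 0)
    (hψbij : Function.Bijective (fderiv ℝ ψ 0)) (htan : (fderiv ℝ ψ 0 (1, 0)).2 = 0)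
    (hτ : ContDiff ℝ ∞ τ) (hτ₀ : τ 0 = 0) (hτ' : deriv τ 0 ≠ 0) :
    ∃ φ : ℝ × ℝ → ℝ × ℝ, ContDiff ℝ ∞ φ ∧ φ 0 = 0 ∧ Function.Bijective (fderiv ℝ φ 0) ∧
      (∀ᶠ p in 𝓝 0, (ψ ((φ p).1, g (φ p))).1 = p.1) ∧
      ∀ᶠ p in 𝓝 (0 : ℝ × ℝ), φ ((ψ (p.1, g (p.1, τ p.2))).1, p.2) = (p.1, τ p.2) := by
  have hgraph : ContDiff ℝ ∞ fun p => (ψ (p.1, g p)).1 := (hψ.comp (contDiff_fst.prodMk hg)).fst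
  obtain ⟨χ, hχ, hχ₀, hχx, hψχ, hχψ⟩ := exists_straightening hgraph
    (by simp [hg₀, hψ₀, Prod.mk_zero_zero])
    (pdx_fst_comp_graph_ne_zero hψ hg hg₀ hgx hψbij htan)
  have ht : Tendsto (fun p : ℝ × ℝ => (p.1, τ p.2)) (𝓝 0) (𝓝 0) :=
    Continuous.tendsto' (by fun_prop) _ _ (by simp [hτ₀])
  have hχτ : ContDiff ℝ ∞ fun p : ℝ × ℝ => χ (p.1, τ p.2) := by fun_prop
  have hτ_snd : ContDiff ℝ ∞ fun p : ℝ × ℝ => τ p.2 := by fun_prop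
  refine ⟨fun p => (χ (p.1, τ p.2), τ p.2), hχτ.prodMk hτ_snd,
    by simp [hτ₀, hχ₀, Prod.mk_zero_zero], ?_, ht.eventually hψχ, ?_⟩
  · have hχτx : pdx (fun p : ℝ × ℝ => χ (p.1, τ p.2)) 0 = pdx χ 0 := by
      simpa [hτ₀, Prod.mk_zero_zero] using
        (hasDerivAt_pdx hχτ 0 0).unique (hasDerivAt_pdx hχ 0 (τ 0))
    have hτx : pdx (fun p : ℝ × ℝ => τ p.2) 0 = 0 :=
      (hasDerivAt_pdx hτ_snd 0 0).unique (hasDerivAt_const 0 (τ 0))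
    have hτy : pdy (fun p : ℝ × ℝ => τ p.2) 0 = deriv τ 0 := (hasDerivAt_pdy hτ_snd 0 0).deriv.symm
    rw [bijective_fderiv_iff_jacDet_ne_zero, jacDet_prodMk hχτ hτ_snd, hχτx, hτx, hτy, zero_mul,
      sub_zero]
    exact mul_ne_zero hχx hτ'
  · filter_upwards [ht.eventually hχψ] with p hp
    simp only [hp]

theorem exists_aEquiv_of_curveEquiv_discriminantCurve (hg : ContDiff ℝ ∞ g) (hg₀ : g 0 = 0)
    (hgx : pdx g 0 = 0) (hσ : IsCriticalCurve g σ) (ha : Continuous a)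
    (h : CurveEquiv (discriminantCurve g σ) fun y => (a y, b y)) :
    ∃ G, ContDiff ℝ ∞ G ∧ AEquiv (fun p => (p.1, g p)) (fun p => (p.1, G p)) ∧
      ∀ᶠ y in 𝓝 0, G (a y, y) = b y ∧ pdy G (a y, y) = 0 := by
  obtain ⟨ψ, τ, hψ, hτ, hψ₀, hτ₀, hψbij, htan, hτ', hψγ⟩ := h
  obtain ⟨φ, hφ, hφ₀, hφbij, hψφ₁, hφψ⟩ :=
    exists_source_diffeomorphism hg hg₀ hgx hψ hψ₀ hψbij htan hτ hτ₀ hτ'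
  let G : ℝ × ℝ → ℝ := fun p => (ψ ((φ p).1, g (φ p))).2
  have hG : ContDiff ℝ ∞ G := (hψ.comp (hφ.fst.prodMk (hg.comp hφ))).snd
  have hψφ : ∀ᶠ p in 𝓝 0, ψ ((φ p).1, g (φ p)) = (p.1, G p) := by
    filter_upwards [hψφ₁] with p hp using Prod.ext hp rfl
  have hσ' := hσ.contDiff
  have hφa : ∀ᶠ y in 𝓝 0, φ (a y, y) = (σ (τ y), τ y) := by
    have ht : Tendsto (fun y => (σ (τ y), y)) (𝓝 0) (𝓝 0) :=
      Continuous.tendsto' (by fun_prop) _ _ (by simp [hτ₀, hσ.map_zero])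
    filter_upwards [ht.eventually hφψ, hψγ] with y h₁ h₂
    simpa only [← discriminantCurve.eq_def, h₂] using h₁
  have ha₀ : a 0 = 0 := by
    have h₀ := hψγ.self_of_nhds
    simp only [discriminantCurve, hτ₀, hσ.map_zero, Prod.mk_zero_zero, hg₀, hψ₀] at h₀
    exact (congrArg Prod.fst h₀).symm
  have ha_tendsto : Tendsto (fun y => (a y, y)) (𝓝 0) (𝓝 0) :=
    Continuous.tendsto' (by fun_prop) _ _ (by simp [ha₀])
  have hτ_tendsto : Tendsto τ (𝓝 0) (𝓝 0) := hτ.continuous.tendsto' _ _ hτ₀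
  refine ⟨G, hG, ⟨φ, ψ, hφ, hψ, hφ₀, hψ₀, hφbij, hψbij, hψφ⟩, ?_⟩
  filter_upwards [hφa, hψγ, hτ_tendsto.eventually hσ.pdy_eq_zero, ha_tendsto.eventually
    (eventually_pdy_eq_zero_iff hg hg₀ hG hφ hψ hφ₀ hφbij hψbij hψφ)] with y h₁ h₂ h₃ h₄
  refine ⟨?_, h₄.2 (h₁ ▸ h₃)⟩
  simp only [G, h₁]
  exact congrArg Prod.snd h₂

end Lift

section GeneratingFamily

variable {G : ℝ × ℝ → ℝ} {N : ℝ → ℝ}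

lemma eventually_pdx_eq_of_discriminant (hN : ContDiff ℝ ∞ N) (hG : ContDiff ℝ ∞ G)
    (hN'' : ∀ᶠ y in 𝓝[≠] 0, deriv (deriv N) y ≠ 0)
    (hcrit : ∀ᶠ y in 𝓝 0,
      G (-deriv N y, y) = N y - y * deriv N y ∧ pdy G (-deriv N y, y) = 0) :
    ∀ᶠ y in 𝓝 0, pdx G (-deriv N y, y) = y := by
  have hN' : ContDiff ℝ ∞ (deriv N) := (contDiff_infty_iff_deriv.1 hN).2
  have hGx := contDiff_pdx hG
  have hpunctured : ∀ᶠ y in 𝓝[≠] 0, pdx G (-deriv N y, y) = y := by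
    filter_upwards [hN'', nhdsWithin_le_nhds hcrit.eventually_nhds] with y hy hy'
    have hd₀ := (hN.differentiable (by simp) y).hasDerivAt
    have hd₁ := (hN'.differentiable (by simp) y).hasDerivAt
    have hleft := hasDerivAt_comp_prodMk hG hd₁.fun_neg (hasDerivAt_id y)
    have hright := hd₀.fun_sub ((hasDerivAt_id y).fun_mul hd₁)
    have heq := (hleft.congr_of_eventuallyEq (hy'.mono fun y h => h.1.symm)).unique hright
    simp only [id, hy'.self_of_nhds.2] at heq
    exact mul_left_cancel₀ hy (by linear_combination -heq)
  exact (ContinuousAt.eventuallyEq_nhds_iff_eventuallyEq_nhdsNE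
    (Continuous.continuousAt (by fun_prop)) continuousAt_id).1 hpunctured

lemma exists_eq_add_sq_mul_of_discriminant (hN : ContDiff ℝ ∞ N) (hG : ContDiff ℝ ∞ G)
    (hN'' : ∀ᶠ y in 𝓝[≠] 0, deriv (deriv N) y ≠ 0)
    (hcrit : ∀ᶠ y in 𝓝 0,
      G (-deriv N y, y) = N y - y * deriv N y ∧ pdy G (-deriv N y, y) = 0) :
    ∃ Q : ℝ × ℝ → ℝ, ContDiff ℝ ∞ Q ∧ ∀ᶠ y in 𝓝 0, ∀ x,
      G (x, y) = x * y + N y + (x + deriv N y) ^ 2 * Q (y, x + deriv N y) := by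
  have hN' : ContDiff ℝ ∞ (deriv N) := (contDiff_infty_iff_deriv.1 hN).2
  obtain ⟨D, Q, -, hQ, hD, hGQ⟩ := exists_contDiff_eq_add_mul_add_sq_mul (E := ℝ)
    (F := fun q => G (q.2 - deriv N q.1, q.1)) (by fun_prop)
  have hD_eq (y : ℝ) : D y = pdx G (-deriv N y, y) := (hD y).unique <| by
    simpa using hasDerivAt_comp_prodMk hG ((hasDerivAt_id (0 : ℝ)).sub_const (deriv N y))
      (hasDerivAt_const 0 y)
  refine ⟨Q, hQ, ?_⟩
  filter_upwards [hcrit, eventually_pdx_eq_of_discriminant hN hG hN'' hcrit] with y h₁ h₂ x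
  have hexpand := hGQ y (x + deriv N y)
  rw [add_sub_cancel_right, zero_sub, h₁.1, hD_eq, h₂] at hexpand
  linear_combination hexpand

lemma exists_taylor_two (hN : ContDiff ℝ ∞ N) (hN₂ : deriv (deriv N) 0 = 0) :
    ∃ R S : ℝ × ℝ → ℝ, ContDiff ℝ ∞ R ∧ ContDiff ℝ ∞ S ∧ R 0 = 0 ∧ S 0 = 0 ∧
      (∀ y v, N (y + v) = N y + v * deriv N y + v ^ 2 * R (y, v)) ∧
      ∀ y v, deriv N (y + v) = deriv N y + v * S (y, v) := by
  have hN' : ContDiff ℝ ∞ (deriv N) := (contDiff_infty_iff_deriv.1 hN).2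
  obtain ⟨D, R, -, hR, hD, hNR⟩ := exists_contDiff_eq_add_mul_add_sq_mul (E := ℝ)
    (F := fun q => N (q.1 + q.2)) (by fun_prop)
  obtain ⟨S, hS, hNS, hS'⟩ := exists_contDiff_eq_add_mul (E := ℝ)
    (F := fun q => deriv N (q.1 + q.2)) (by fun_prop)
  have hD_eq (y : ℝ) : D y = deriv N y := (hD y).unique <| by
    simpa using HasDerivAt.comp_const_add y 0 (hN.differentiable (by simp) (y + 0)).hasDerivAt
  have hS₀ : S 0 = 0 := (hS' 0).unique <| by
    simpa [hN₂] using
      HasDerivAt.comp_const_add 0 0 (hN'.differentiable (by simp) (0 + 0)).hasDerivAt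
  have hR₀ : R 0 = 0 := by
    obtain ⟨k, hk, hNk⟩ := exists_contDiff_eq_taylor_add_pow_mul 3 hN
    have hzero (v : ℝ) : 0 + v * (0 + v * (R (0, v) - v * k v)) = 0 := by
      have h₁ : N v = N 0 + v * deriv N 0 + v ^ 2 * R (0, v) := by simpa [hD_eq] using hNR 0 v
      have h₂ : N v = N 0 + deriv N 0 * v + v ^ 3 * k v := by
        simpa [Finset.sum_range_succ, iteratedDeriv_succ, hN₂] using hNk v
      linear_combination h₂ - h₁
    have hone := (eq_zero_and_eventually_eq_zero_of_add_id_mul (by fun_prop)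
      (Eventually.of_forall hzero)).2
    have htwo := (eq_zero_and_eventually_eq_zero_of_add_id_mul (by fun_prop) hone).2
    simpa [Prod.mk_zero_zero] using htwo.self_of_nhds
  refine ⟨R, S, hR, hS, hR₀, hS₀, fun y v => ?_, fun y v => ?_⟩
  · simpa [hD_eq] using hNR y v
  · simpa using hNS y v

theorem exists_comp_eq_id_mul_add (hN : ContDiff ℝ ∞ N) (hN₁ : deriv N 0 = 0)
    (hN₂ : deriv (deriv N) 0 = 0) (hN'' : ∀ᶠ y in 𝓝[≠] 0, deriv (deriv N) y ≠ 0)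
    (hG : ContDiff ℝ ∞ G) (hcrit : ∀ᶠ y in 𝓝 0,
      G (-deriv N y, y) = N y - y * deriv N y ∧ pdy G (-deriv N y, y) = 0) :
    ∃ z : ℝ × ℝ → ℝ, ContDiff ℝ ∞ z ∧ ∀ᶠ p in 𝓝 0,
      G (p.1, p.2 + (p.1 + deriv N p.2) * z p) = p.1 * p.2 + N p.2 := by
  have hN' : ContDiff ℝ ∞ (deriv N) := (contDiff_infty_iff_deriv.1 hN).2
  obtain ⟨Q, hQ, hGQ⟩ := exists_eq_add_sq_mul_of_discriminant hN hG hN'' hcrit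
  obtain ⟨R, S, hR, hS, hR₀, hS₀, hNR, hNS⟩ := exists_taylor_two hN hN₂
  let W : ℝ × ℝ → ℝ := fun p => p.1 + deriv N p.2
  have hW : ContDiff ℝ ∞ W := by fun_prop
  have hW₀ : W 0 = 0 := by simp [W, hN₁]
  obtain ⟨z, hz, -, hzeq, -⟩ := exists_contDiff_implicitFunction (E := ℝ × ℝ) (p₀ := 0) (c := 1)
    (z₀ := -Q 0) (F := fun q => q.2 + q.2 ^ 2 * R (q.1.2, W q.1 * q.2) +
      (1 + q.2 * S (q.1.2, W q.1 * q.2)) ^ 2 *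
        Q (q.1.2 + W q.1 * q.2, q.1.1 + deriv N (q.1.2 + W q.1 * q.2))) (by fun_prop)
    (by simp [hW₀, hN₁, hR₀, hS₀, Prod.mk_zero_zero])
    (by simpa [hW₀, hN₁, hR₀, hS₀, Prod.mk_zero_zero] using (hasDerivAt_id (-Q 0)).add_const (Q 0))
    one_ne_zero
  refine ⟨z, hz, ?_⟩
  have ht : Tendsto (fun p : ℝ × ℝ => p.2 + W p * z p) (𝓝 0) (𝓝 0) :=
    Continuous.tendsto' (by fun_prop) _ _ (by simp [hW₀])
  filter_upwards [ht.eventually hGQ, hzeq] with p h₁ h₂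
  change G (p.1, p.2 + W p * z p) = _
  rw [h₁]
  rw [hNS] at h₂ ⊢
  rw [hNR]
  linear_combination W p ^ 2 * h₂

theorem aEquiv_id_mul_add_of_discriminant (hN : ContDiff ℝ ∞ N) (hN₁ : deriv N 0 = 0)
    (hN₂ : deriv (deriv N) 0 = 0) (hN'' : ∀ᶠ y in 𝓝[≠] 0, deriv (deriv N) y ≠ 0)
    (hG : ContDiff ℝ ∞ G) (hcrit : ∀ᶠ y in 𝓝 0,
      G (-deriv N y, y) = N y - y * deriv N y ∧ pdy G (-deriv N y, y) = 0) :
    AEquiv (fun p => (p.1, G p)) (fun p => (p.1, p.1 * p.2 + N p.2)) := by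
  have hN' : ContDiff ℝ ∞ (deriv N) := (contDiff_infty_iff_deriv.1 hN).2
  obtain ⟨z, hz, hGz⟩ := exists_comp_eq_id_mul_add hN hN₁ hN₂ hN'' hG hcrit
  have hv : ContDiff ℝ ∞ fun p : ℝ × ℝ => p.2 + (p.1 + deriv N p.2) * z p := by fun_prop
  have hpdy : pdy (fun p : ℝ × ℝ => p.2 + (p.1 + deriv N p.2) * z p) 0 = 1 := by
    have hD := (hasDerivAt_id (0 : ℝ)).fun_add <|
      ((hN'.differentiable (by simp) 0).hasDerivAt.const_add 0).fun_mul (hasDerivAt_pdy hz 0 0)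
    simpa [hN₁, hN₂, Prod.mk_zero_zero] using (hasDerivAt_pdy hv 0 0).unique hD
  refine ⟨fun p => (p.1, p.2 + (p.1 + deriv N p.2) * z p), id, by fun_prop, contDiff_id,
    by simp [hN₁], rfl, ?_, by simpa using Function.bijective_id, ?_⟩
  · rw [bijective_fderiv_iff_jacDet_ne_zero, jacDet_fst_prodMk hv, hpdy]
    exact one_ne_zero
  · filter_upwards [hGz] with p hp
    simp [hp]

theorem aEquiv_id_mul_add_of_curveEquiv {g : ℝ × ℝ → ℝ} {σ : ℝ → ℝ} (hg : ContDiff ℝ ∞ g)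
    (hg₀ : g 0 = 0) (hgx : pdx g 0 = 0) (hσ : IsCriticalCurve g σ) (hN : ContDiff ℝ ∞ N)
    (hN₁ : deriv N 0 = 0) (hN₂ : deriv (deriv N) 0 = 0)
    (hN'' : ∀ᶠ y in 𝓝[≠] 0, deriv (deriv N) y ≠ 0)
    (h : CurveEquiv (discriminantCurve g σ) fun y => (-deriv N y, N y - y * deriv N y)) :
    AEquiv (fun p => (p.1, g p)) (fun p => (p.1, p.1 * p.2 + N p.2)) := by
  have hN' : ContDiff ℝ ∞ (deriv N) := (contDiff_infty_iff_deriv.1 hN).2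
  obtain ⟨G, hG, hgG, hcrit⟩ :=
    exists_aEquiv_of_curveEquiv_discriminantCurve hg hg₀ hgx hσ (by fun_prop) h
  exact hgG.trans (aEquiv_id_mul_add_of_discriminant hN hN₁ hN₂ hN'' hG hcrit)

end GeneratingFamily

/-! ### Invariants of discriminant curves -/

section CurveInvariants

lemma exists_comp_mul_mul_eq {h : ℝ × ℝ → ℝ} (hh : ContDiff ℝ ∞ h) (h₀ : h 0 = 0) :
    ∃ Q : (ℝ × ℝ) × ℝ → ℝ, ContDiff ℝ ∞ Q ∧ ∀ u v t,
      h (t * u, t * v) = t * (u * pdx h 0 + v * pdy h 0) + t ^ 2 * Q ((u, v), t) := by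
  obtain ⟨D, Q, -, hQ, hD, hhQ⟩ := exists_contDiff_eq_add_mul_add_sq_mul (E := ℝ × ℝ)
    (F := fun q => h (q.2 * q.1.1, q.2 * q.1.2)) (by fun_prop)
  have hD_eq (u v : ℝ) : D (u, v) = u * pdx h 0 + v * pdy h 0 := (hD (u, v)).unique <| by
    simpa [Prod.mk_zero_zero] using hasDerivAt_comp_prodMk hh
      ((hasDerivAt_id (0 : ℝ)).mul_const u) ((hasDerivAt_id (0 : ℝ)).mul_const v)
  refine ⟨Q, hQ, fun u v t => ?_⟩
  simpa [Prod.mk_zero_zero, h₀, hD_eq] using hhQ (u, v) t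

variable {γ γ' : ℝ → ℝ × ℝ} {U V U' V' : ℝ → ℝ}

theorem CurveEquiv.exists_coordinates_eq {m : ℕ} (h : CurveEquiv γ γ') (hU : ContDiff ℝ ∞ U)
    (hV : ContDiff ℝ ∞ V) (hU' : ContDiff ℝ ∞ U') (hV' : ContDiff ℝ ∞ V')
    (hγ : ∀ᶠ y in 𝓝 0, γ y = (y ^ (m + 1) * U y, y ^ (m + 2) * V y))
    (hγ' : ∀ᶠ y in 𝓝 0, γ' y = (y ^ (m + 1) * U' y, y ^ (m + 2) * V' y)) :
    ∃ (T k l : ℝ → ℝ) (a b d : ℝ), ContDiff ℝ ∞ T ∧ ContDiff ℝ ∞ k ∧ ContDiff ℝ ∞ l ∧ T 0 ≠ 0 ∧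
      (∀ᶠ y in 𝓝 0, a * (T y ^ (m + 1) * U (y * T y)) +
        b * (y * (T y ^ (m + 2) * V (y * T y))) + y ^ (m + 1) * k y = U' y) ∧
      ∀ᶠ y in 𝓝 0, d * (T y ^ (m + 2) * V (y * T y)) + y ^ m * l y = V' y := by
  obtain ⟨ψ, τ, hψ, hτ, hψ₀, hτ₀, -, htan, hτ', hψγ⟩ := h
  obtain ⟨T, hT, hτT⟩ := exists_contDiff_eq_add_id_mul hτ
  obtain rfl : τ = fun y => y * T y := funext fun y => by rw [hτT, hτ₀, zero_add]
  have hT₀ : T 0 ≠ 0 := by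
    have hd := (hasDerivAt_id' (0 : ℝ)).fun_mul (hT.differentiable (by simp) 0).hasDerivAt
    simpa [hd.deriv] using hτ'
  obtain ⟨Q₁, hQ₁, hψ₁⟩ := exists_comp_mul_mul_eq hψ.fst (by simp [hψ₀])
  obtain ⟨Q₂, hQ₂, hψ₂⟩ := exists_comp_mul_mul_eq hψ.snd (by simp [hψ₀])
  have htan' : pdx (fun p => (ψ p).2) 0 = 0 := by
    simpa [pdx, dop, fderiv.snd (hψ.differentiable (by simp) 0)] using htan
  let P : ℝ → ℝ := fun y => T y ^ (m + 1) * U (y * T y)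
  let S : ℝ → ℝ := fun y => T y ^ (m + 2) * V (y * T y)
  have hP : ContDiff ℝ ∞ P := by fun_prop
  have hS : ContDiff ℝ ∞ S := by fun_prop
  have hψPS : ∀ᶠ y in 𝓝 0, ψ (y ^ (m + 1) * P y, y ^ (m + 1) * (y * S y)) =
      (y ^ (m + 1) * U' y, y ^ (m + 2) * V' y) := by
    have htend : Tendsto (fun y => y * T y) (𝓝 0) (𝓝 0) := hτ.continuous.tendsto' _ _ hτ₀
    filter_upwards [hψγ, htend.eventually hγ, hγ'] with y h₁ h₂ h₃
    rw [← h₃, ← h₁, h₂]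
    congr 2 <;> ring
  refine ⟨T, fun y => Q₁ ((P y, y * S y), y ^ (m + 1)), fun y => Q₂ ((P y, y * S y), y ^ (m + 1)),
    pdx (fun p => (ψ p).1) 0, pdy (fun p => (ψ p).1) 0, pdy (fun p => (ψ p).2) 0,
    hT, by fun_prop, by fun_prop, hT₀, ?_, ?_⟩
  · refine eventuallyEq_of_pow_mul_eq (m + 1) (by fun_prop) (by fun_prop) ?_
    filter_upwards [hψPS] with y hy
    linear_combination congrArg Prod.fst hy - hψ₁ (P y) (y * S y) (y ^ (m + 1))
  · refine eventuallyEq_of_pow_mul_eq (m + 2) (by fun_prop) (by fun_prop) ?_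
    filter_upwards [hψPS] with y hy
    have hψ₂y := hψ₂ (P y) (y * S y) (y ^ (m + 1))
    rw [htan'] at hψ₂y
    linear_combination congrArg Prod.snd hy - hψ₂y

namespace HasDiscriminantJet

variable {a₇ a₈ a₉ ε α : ℝ}

lemma eq_of_jet_eq {s p q r a b d : ℝ} {T : ℝ → ℝ}
    (hT : HasCubicJet T s (s * p) (s * q) (s * r))
    (hU : HasCubicJet U (-6) (-(7 * a₇)) (-(8 * a₈)) (-(9 * a₉)))
    (hV : HasCubicJet V (-5) (-(6 * a₇)) (-(7 * a₈)) (-(8 * a₉)))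
    (hU' : HasCubicJet (fun y => a * (T y ^ 5 * U (y * T y)) + b * (y * (T y ^ 6 * V (y * T y))))
      (-6) 0 (-(8 * ε)) (-(9 * α)))
    (hV' : HasCubicJet (fun y => d * (T y ^ 6 * V (y * T y))) (-5) 0 (-(7 * ε)) (-(8 * α))) :
    ε = s ^ 2 * (a₈ - 3 / 5 * a₇ ^ 2) ∧
      α = s ^ 3 * (a₉ - 7 / 5 * a₇ * a₈ + 14 / 25 * a₇ ^ 3) := by
  have hUT := hU.pow_mul_comp hT 5
  have hVT := hV.pow_mul_comp hT 6
  obtain ⟨h₀, h₁, h₂, h₃⟩ := ((hUT.const_mul a).add (hVT.id_mul.const_mul b)).unique hU'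
  obtain ⟨h₀', h₁', h₂', h₃'⟩ := (hVT.const_mul d).unique hV'
  push_cast at h₀ h₁ h₂ h₃ h₀' h₁' h₂' h₃'
  have ha : a * s ^ 5 = 1 := by linear_combination -h₀ / 6
  have hd : d * s ^ 6 = 1 := by linear_combination -h₀' / 5
  simp only [← mul_assoc d, hd, one_mul] at h₁' h₂' h₃'
  simp only [← mul_assoc a, ha, one_mul] at h₁ h₂ h₃
  have hp : p = -(a₇ * s) / 5 := by linear_combination -h₁' / 30
  have hb : b * s ^ 6 = p := by linear_combination -h₁ / 5 + 7 / 30 * h₁'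
  simp only [← mul_assoc b, hb] at h₂ h₃
  subst hp
  have hε : ε = s ^ 2 * (a₈ - 3 / 5 * a₇ ^ 2) := by linear_combination h₂ - h₂'
  have hq : q = (a₇ * s) ^ 2 / 25 := by linear_combination (7 * h₂ - 8 * h₂') / 30
  subst hq hε
  exact ⟨rfl, by linear_combination h₃ - h₃'⟩

theorem exists_scaling_of_curveEquiv (h : HasDiscriminantJet γ a₇ a₈ a₉)
    (h' : HasDiscriminantJet γ' 0 ε α) (hγγ' : CurveEquiv γ γ') :
    ∃ s ≠ 0, ε = s ^ 2 * (a₈ - 3 / 5 * a₇ ^ 2) ∧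
      α = s ^ 3 * (a₉ - 7 / 5 * a₇ * a₈ + 14 / 25 * a₇ ^ 3) := by
  obtain ⟨U, V, hU, hV, hUjet, hVjet, hγ⟩ := h
  obtain ⟨U', V', hU', hV', hUjet', hVjet', hγ'⟩ := h'
  obtain ⟨T, k, l, a, b, d, hT, hk, hl, hT₀, hfst, hsnd⟩ :=
    hγγ'.exists_coordinates_eq (m := 4) hU hV hU' hV' hγ hγ'
  have hjet (c : ℝ) : T 0 * (c / T 0) = c := mul_div_cancel₀ c hT₀
  refine ⟨T 0, hT₀, eq_of_jet_eq (a := a) (b := b) (d := d)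
    ((HasCubicJet.of_contDiff hT).cast rfl (hjet _).symm (hjet _).symm (hjet _).symm)
    hUjet hVjet ?_ ?_⟩
  · refine ((hUjet'.add_pow_four_mul (k := fun y => -(y * k y)) (by fun_prop)).congr ?_).cast
      rfl (by ring) rfl rfl
    filter_upwards [hfst] with y hy
    linear_combination -hy
  · refine ((hVjet'.add_pow_four_mul (k := fun y => -l y) (by fun_prop)).congr ?_).cast
      rfl (by ring) rfl rfl
    filter_upwards [hsnd] with y hy
    linear_combination -hy

end HasDiscriminantJet

end CurveInvariants

section DiscriminantInvariance

variable {g G : ℝ × ℝ → ℝ} {σ σ' : ℝ → ℝ}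

lemma IsCriticalCurve.fderiv_eq_zero (hσ : IsCriticalCurve g σ) (hgx : pdx g 0 = 0) :
    fderiv ℝ g 0 = 0 := by
  have hgy : pdy g 0 = 0 := by
    simpa [hσ.map_zero, Prod.mk_zero_zero] using hσ.pdy_eq_zero.self_of_nhds
  exact ContinuousLinearMap.ext fun v => by simp [fderiv_apply_eq_pdx_add_pdy, hgx, hgy]

lemma fderiv_comp_graph_eq {φ ψ : ℝ × ℝ → ℝ × ℝ} (hg : ContDiff ℝ ∞ g) (hg₀ : g 0 = 0)
    (hG : ContDiff ℝ ∞ G) (hDg : fderiv ℝ g 0 = 0) (hDG : fderiv ℝ G 0 = 0)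
    (hφ : ContDiff ℝ ∞ φ) (hψ : ContDiff ℝ ∞ ψ) (hφ₀ : φ 0 = 0)
    (h : ∀ᶠ p in 𝓝 0, ψ ((φ p).1, g (φ p)) = (p.1, G p)) (v : ℝ × ℝ) :
    fderiv ℝ ψ 0 ((fderiv ℝ φ 0 v).1, 0) = (v.1, 0) := by
  have hDφ := (hφ.differentiable (by simp) 0).hasFDerivAt
  have hDgφ : HasFDerivAt (fun p => g (φ p)) (0 : ℝ × ℝ →L[ℝ] ℝ) 0 := by
    have hcomp := (hg.differentiable (by simp) (φ 0)).hasFDerivAt.comp 0 hDφ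
    rwa [hφ₀, hDg, ContinuousLinearMap.zero_comp] at hcomp
  have hDψ : HasFDerivAt ψ (fderiv ℝ ψ 0) ((φ 0).1, g (φ 0)) := by
    simpa [hφ₀, hg₀, Prod.mk_zero_zero] using (hψ.differentiable (by simp) 0).hasFDerivAt
  have hleft : HasFDerivAt (fun p => ψ ((φ p).1, g (φ p))) _ 0 :=
    hDψ.comp (0 : ℝ × ℝ) (hDφ.fst.prodMk hDgφ)
  have hright : HasFDerivAt (fun p : ℝ × ℝ => (p.1, G p))
      ((ContinuousLinearMap.fst ℝ ℝ ℝ).prod 0) 0 :=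
    hasFDerivAt_fst.prodMk (hDG ▸ (hG.differentiable (by simp) 0).hasFDerivAt)
  simpa using DFunLike.congr_fun (hleft.unique (hright.congr_of_eventuallyEq h)) v

theorem AEquiv.curveEquiv_discriminantCurve (hg : ContDiff ℝ ∞ g) (hg₀ : g 0 = 0)
    (hgx : pdx g 0 = 0) (hσ : IsCriticalCurve g σ) (hG : ContDiff ℝ ∞ G) (hGx : pdx G 0 = 0)
    (hσ' : IsCriticalCurve G σ') (hσ₁' : deriv σ' 0 = 0)
    (h : AEquiv (fun p => (p.1, g p)) (fun p => (p.1, G p))) :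
    CurveEquiv (discriminantCurve g σ) (discriminantCurve G σ') := by
  obtain ⟨φ, ψ, hφ, hψ, hφ₀, hψ₀, hφbij, hψbij, hφψ⟩ := h
  have hD := fderiv_comp_graph_eq hg hg₀ hG (hσ.fderiv_eq_zero hgx) (hσ'.fderiv_eq_zero hGx)
    hφ hψ hφ₀ hφψ
  let c : ℝ → ℝ × ℝ := fun y => (σ' y, y)
  have hc : ContDiff ℝ ∞ c := hσ'.contDiff.prodMk contDiff_id
  have hc₀ : c 0 = 0 := Prod.ext hσ'.map_zero rfl
  have hct : Tendsto c (𝓝 0) (𝓝 0) := hc.continuous.tendsto' _ _ hc₀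
  have hφct : Tendsto (fun y => φ (c y)) (𝓝 0) (𝓝 0) :=
    (hφ.comp hc).continuous.tendsto' _ _ (by simp [hc₀, hφ₀])
  have hτ' : deriv (fun y => (φ (c y)).2) 0 = (fderiv ℝ φ 0 (0, 1)).2 := by
    have hDc : HasDerivAt c (0, 1) 0 := by
      simpa [hσ₁'] using
        (hσ'.contDiff.differentiable (by simp) 0).hasDerivAt.prodMk (hasDerivAt_id 0)
    have hcomp := (hφ.differentiable (by simp) (c 0)).snd.hasFDerivAt.comp_hasDerivAt 0 hDc
    rw [hc₀, fderiv.snd (hφ.differentiable (by simp) 0)] at hcomp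
    exact hcomp.deriv
  refine ⟨ψ, fun y => (φ (c y)).2, hψ, (hφ.comp hc).snd, hψ₀, by simp [hc₀, hφ₀], hψbij, ?_, ?_, ?_⟩
  · have hx : (fderiv ℝ φ 0 (1, 0)).1 ≠ 0 := fun h₀ => by
      simpa [h₀, Prod.mk_zero_zero] using congrArg Prod.fst (hD (1, 0))
    have hscale : fderiv ℝ ψ 0 ((fderiv ℝ φ 0 (1, 0)).1 • (1, 0)) = (1, 0) := by
      simpa using hD (1, 0)
    rw [map_smul] at hscale
    simpa [hx] using congrArg Prod.snd hscale
  · have hy : (fderiv ℝ φ 0 (0, 1)).1 = 0 := by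
      simpa [Prod.mk_eq_zero] using (injective_iff_map_eq_zero _).1 hψbij.1 _ (hD (0, 1))
    have hdet := bijective_fderiv_iff_jacDet_ne_zero.1 hφbij
    rw [jacDet, hy, mul_zero, sub_zero] at hdet
    exact hτ'.trans_ne (right_ne_zero_of_mul hdet)
  · have hiff := eventually_pdy_eq_zero_iff hg hg₀ hG hφ hψ hφ₀ hφbij hψbij hφψ
    filter_upwards [hct.eventually hφψ, hct.eventually hiff, hσ'.pdy_eq_zero,
      hφct.eventually hσ.eq_of_pdy_eq_zero] with y h₁ h₂ h₃ h₄
    rw [discriminantCurve, ← h₄ (h₂.1 h₃)]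
    exact h₁

end DiscriminantInvariance

/-! ### Normal forms -/

section NormalForm

variable {g : ℝ × ℝ → ℝ} {σ N : ℝ → ℝ}

lemma pdx_id_mul_add (hN : ContDiff ℝ ∞ N) (p : ℝ × ℝ) :
    pdx (fun p => p.1 * p.2 + N p.2) p = p.2 := by
  have hG : ContDiff ℝ ∞ fun p : ℝ × ℝ => p.1 * p.2 + N p.2 := by fun_prop
  exact (hasDerivAt_pdx hG p.1 p.2).unique <|
    (((hasDerivAt_id' p.1).mul_const p.2).add_const (N p.2)).congr_deriv (one_mul _)

lemma pdy_id_mul_add (hN : ContDiff ℝ ∞ N) (p : ℝ × ℝ) :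
    pdy (fun p => p.1 * p.2 + N p.2) p = p.1 + deriv N p.2 := by
  have hG : ContDiff ℝ ∞ fun p : ℝ × ℝ => p.1 * p.2 + N p.2 := by fun_prop
  exact (hasDerivAt_pdy hG p.1 p.2).unique <|
    (((hasDerivAt_id' p.2).const_mul p.1).fun_add
      (hN.differentiable (by simp) p.2).hasDerivAt).congr_deriv (by rw [mul_one])

lemma isCriticalCurve_id_mul_add (hN : ContDiff ℝ ∞ N) (hN₁ : deriv N 0 = 0) :
    IsCriticalCurve (fun p => p.1 * p.2 + N p.2) fun y => -deriv N y where
  contDiff := (contDiff_infty_iff_deriv.1 hN).2.neg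
  map_zero := by simp [hN₁]
  pdy_eq_zero := .of_forall fun y => by simp [pdy_id_mul_add hN]
  eq_of_pdy_eq_zero := .of_forall fun p hp =>
    eq_neg_of_add_eq_zero_left ((pdy_id_mul_add hN p).symm.trans hp)

lemma discriminantCurve_id_mul_add :
    discriminantCurve (fun p => p.1 * p.2 + N p.2) (fun y => -deriv N y) =
      fun y => (-deriv N y, N y - y * deriv N y) :=
  funext fun y => Prod.ext rfl (by simp only [discriminantCurve]; ring)

theorem aEquiv_id_mul_add_iff_curveEquiv (hg : ContDiff ℝ ∞ g) (hg₀ : g 0 = 0)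
    (hgx : pdx g 0 = 0) (hσ : IsCriticalCurve g σ) (hN : ContDiff ℝ ∞ N) (hN₁ : deriv N 0 = 0)
    (hN₂ : deriv (deriv N) 0 = 0) (hN'' : ∀ᶠ y in 𝓝[≠] 0, deriv (deriv N) y ≠ 0) :
    AEquiv (fun p => (p.1, g p)) (fun p => (p.1, p.1 * p.2 + N p.2)) ↔
      CurveEquiv (discriminantCurve g σ) fun y => (-deriv N y, N y - y * deriv N y) := by
  refine ⟨fun h => ?_, aEquiv_id_mul_add_of_curveEquiv hg hg₀ hgx hσ hN hN₁ hN₂ hN''⟩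
  simpa only [discriminantCurve_id_mul_add] using
    h.curveEquiv_discriminantCurve hg hg₀ hgx hσ (by fun_prop) (pdx_id_mul_add hN 0)
      (isCriticalCurve_id_mul_add hN hN₁) (by rw [deriv.fun_neg, hN₂, neg_zero])

variable {ε α : ℝ}

lemma deriv_normalForm :
    deriv (fun y : ℝ => y ^ 6 + ε * y ^ 8 + α * y ^ 9) = fun y => -(y ^ 5 * normalFst ε α y) :=
  funext fun y => ((((hasDerivAt_pow 6 y).fun_add ((hasDerivAt_pow 8 y).const_mul ε)).fun_add
    ((hasDerivAt_pow 9 y).const_mul α)).congr_deriv (by push_cast [normalFst]; ring)).deriv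

lemma deriv_deriv_normalForm (y : ℝ) :
    deriv (deriv fun y : ℝ => y ^ 6 + ε * y ^ 8 + α * y ^ 9) y =
      y ^ 4 * (30 + 56 * ε * y ^ 2 + 72 * α * y ^ 3) := by
  have hform : deriv (fun y : ℝ => y ^ 6 + ε * y ^ 8 + α * y ^ 9) =
      fun y => 6 * y ^ 5 + 8 * ε * y ^ 7 + 9 * α * y ^ 8 := by
    rw [deriv_normalForm]
    funext y
    rw [normalFst]
    ring
  rw [hform]
  exact (((((hasDerivAt_pow 5 y).const_mul 6).fun_add ((hasDerivAt_pow 7 y).const_mul _)).fun_add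
    ((hasDerivAt_pow 8 y).const_mul _)).congr_deriv (by push_cast; ring)).deriv

lemma eventually_deriv_deriv_normalForm_ne_zero :
    ∀ᶠ y in 𝓝[≠] 0, deriv (deriv fun y : ℝ => y ^ 6 + ε * y ^ 8 + α * y ^ 9) y ≠ 0 := by
  have hunit : ∀ᶠ y : ℝ in 𝓝 0, 30 + 56 * ε * y ^ 2 + 72 * α * y ^ 3 ≠ 0 :=
    ContinuousAt.eventually_ne (by fun_prop) (by norm_num)
  filter_upwards [self_mem_nhdsWithin, nhdsWithin_le_nhds hunit] with y hy hy'
  rw [deriv_deriv_normalForm]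
  exact mul_ne_zero (pow_ne_zero 4 hy) hy'

theorem aEquiv_normalForm_iff_curveEquiv (hg : ContDiff ℝ ∞ g) (hg₀ : g 0 = 0)
    (hgx : pdx g 0 = 0) (hσ : IsCriticalCurve g σ) :
    AEquiv (fun p => (p.1, g p))
        (fun p => (p.1, p.1 * p.2 + p.2 ^ 6 + ε * p.2 ^ 8 + α * p.2 ^ 9)) ↔
      CurveEquiv (discriminantCurve g σ)
        fun y => (y ^ 5 * normalFst ε α y, y ^ 6 * normalSnd ε α y) := by
  have h := aEquiv_id_mul_add_iff_curveEquiv (N := fun y => y ^ 6 + ε * y ^ 8 + α * y ^ 9)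
    hg hg₀ hgx hσ (by fun_prop) (by simp [deriv_normalForm]) (by simp [deriv_deriv_normalForm])
    eventually_deriv_deriv_normalForm_ne_zero
  have hcurve (y : ℝ) : y ^ 6 + ε * y ^ 8 + α * y ^ 9 - y * -(y ^ 5 * normalFst ε α y) =
      y ^ 6 * normalSnd ε α y := by
    rw [normalFst, normalSnd]
    ring
  simpa only [deriv_normalForm, neg_neg, hcurve, ← add_assoc] using h

lemma hasDiscriminantJet_normal :
    HasDiscriminantJet (fun y => (y ^ 5 * normalFst ε α y, y ^ 6 * normalSnd ε α y)) 0 ε α :=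
  ⟨normalFst ε α, normalSnd ε α, by unfold normalFst; fun_prop, by unfold normalSnd; fun_prop,
    ⟨0, contDiff_const, .of_forall fun y => by simp only [normalFst, Pi.zero_apply]; ring⟩,
    ⟨0, contDiff_const, .of_forall fun y => by simp only [normalSnd, Pi.zero_apply]; ring⟩,
    .of_forall fun _ => rfl⟩

theorem aEquiv_normalForm_iff (hg : ContDiff ℝ ∞ g) (hP : ∀ i j, i + j < 7 →
    tcoeff g i j = if (i, j) = (1, 1) ∨ (i, j) = (0, 6) then 1 else 0) (hne : ε ≠ 0 ∨ α ≠ 0) :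
    AEquiv (fun p => (p.1, g p))
        (fun p => (p.1, p.1 * p.2 + p.2 ^ 6 + ε * p.2 ^ 8 + α * p.2 ^ 9)) ↔
      ∃ s ≠ 0, ε = s ^ 2 * (tcoeff g 0 8 - 3 / 5 * tcoeff g 0 7 ^ 2) ∧
        α = s ^ 3 * (tcoeff g 0 9 - 7 / 5 * tcoeff g 0 7 * tcoeff g 0 8 +
          14 / 25 * tcoeff g 0 7 ^ 3) := by
  have hg₀ : g 0 = 0 := by simpa [tcoeff] using hP 0 0
  have hgx : pdx g 0 = 0 := by simpa [tcoeff] using hP 1 0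
  obtain ⟨σ, hσ, hjet⟩ := exists_isCriticalCurve_hasDiscriminantJet hg hP
  rw [aEquiv_normalForm_iff_curveEquiv hg hg₀ hgx hσ]
  exact ⟨hjet.exists_scaling_of_curveEquiv hasDiscriminantJet_normal,
    fun ⟨_, hs, hε, hα⟩ => hjet.curveEquiv_normal hs hε hα hne⟩

end NormalForm

lemma exists_sq_mul_eq_one_or_neg_one {A : ℝ} (hA : A ≠ 0) :
    ∃ s ≠ 0, s ^ 2 * A = 1 ∨ s ^ 2 * A = -1 := by
  refine ⟨(√|A|)⁻¹, inv_ne_zero (Real.sqrt_ne_zero'.2 (abs_pos.2 hA)), ?_⟩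
  rw [inv_pow, Real.sq_sqrt (abs_nonneg A)]
  rcases abs_choice A with h | h
  · exact .inl (by rw [h, inv_mul_cancel₀ hA])
  · exact .inr (by rw [h, inv_neg, neg_mul, inv_mul_cancel₀ hA])

lemma exists_pow_mul_eq_one {n : ℕ} (hn : Odd n) {B : ℝ} (hB : B ≠ 0) :
    ∃ s ≠ 0, s ^ n * B = 1 := by
  obtain ⟨r, -, hr, -⟩ := exists_continuous_leftInverse_pow hn
  have hs : r B⁻¹ ^ n * B = 1 := by rw [hr, inv_mul_cancel₀ hB]
  exact ⟨r B⁻¹, fun h₀ => by simp [h₀, hn.pos.ne'] at hs, hs⟩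

lemma exists_scaling_zero_one_iff {a₇ a₈ a₉ : ℝ} :
    (∃ s ≠ 0, 0 = s ^ 2 * (a₈ - 3 / 5 * a₇ ^ 2) ∧
        1 = s ^ 3 * (a₉ - 7 / 5 * a₇ * a₈ + 14 / 25 * a₇ ^ 3)) ↔
      a₈ - 3 / 5 * a₇ ^ 2 = 0 ∧ a₉ - 7 / 25 * a₇ ^ 3 ≠ 0 := by
  have hinv (h : a₈ - 3 / 5 * a₇ ^ 2 = 0) :
      a₉ - 7 / 5 * a₇ * a₈ + 14 / 25 * a₇ ^ 3 = a₉ - 7 / 25 * a₇ ^ 3 := by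
    linear_combination -7 / 5 * a₇ * h
  constructor
  · rintro ⟨s, hs, h₈, h₉⟩
    have hA := (mul_eq_zero.1 h₈.symm).resolve_left (pow_ne_zero 2 hs)
    rw [hinv hA] at h₉
    exact ⟨hA, right_ne_zero_of_mul (h₉ ▸ one_ne_zero)⟩
  · rintro ⟨hA, hB⟩
    obtain ⟨s, hs, hsB⟩ := exists_pow_mul_eq_one (n := 3) (by decide) hB
    exact ⟨s, hs, by rw [hA, mul_zero], by rw [hinv hA, hsB]⟩

theorem stmt5 (f : ℝ × ℝ → ℝ × ℝ) (g : ℝ × ℝ → ℝ) (hf0 : f 0 = 0)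
    (hform : HasForm f g 7 (fun i j => if (i, j) = (1, 1) ∨ (i, j) = (0, 6) then 1 else 0)) :
    (tcoeff g 0 8 - 3 / 5 * tcoeff g 0 7 ^ 2 ≠ 0 ↔
      ∃ ε : ℝ, (ε = 1 ∨ ε = -1) ∧ ∃ α : ℝ,
        AEquiv f (fun p => (p.1, p.1 * p.2 + p.2 ^ 6 + ε * p.2 ^ 8 + α * p.2 ^ 9))) ∧
    ((tcoeff g 0 8 - 3 / 5 * tcoeff g 0 7 ^ 2 = 0 ∧
        tcoeff g 0 9 - 7 / 25 * tcoeff g 0 7 ^ 3 ≠ 0) ↔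
      AEquiv f (fun p => (p.1, p.1 * p.2 + p.2 ^ 6 + p.2 ^ 9))) := by
  obtain ⟨hg, hf, hP⟩ := hform
  obtain rfl : f = fun p => (p.1, g p) := funext hf
  refine ⟨⟨fun hA => ?_, ?_⟩, ?_⟩
  · obtain ⟨s, hs, hsA⟩ := exists_sq_mul_eq_one_or_neg_one hA
    have hε : s ^ 2 * (tcoeff g 0 8 - 3 / 5 * tcoeff g 0 7 ^ 2) ≠ 0 :=
      mul_ne_zero (pow_ne_zero 2 hs) hA
    exact ⟨_, hsA, _, (aEquiv_normalForm_iff hg hP (.inl hε)).2 ⟨s, hs, rfl, rfl⟩⟩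
  · rintro ⟨ε, hε, α, h⟩
    have hε₀ : ε ≠ 0 := by rcases hε with rfl | rfl <;> norm_num
    obtain ⟨s, -, rfl, -⟩ := (aEquiv_normalForm_iff hg hP (.inl hε₀)).1 h
    exact right_ne_zero_of_mul hε₀
  · have hiff := aEquiv_normalForm_iff (ε := 0) hg hP (.inr one_ne_zero)
    simp only [zero_mul, one_mul, add_zero] at hiff
    exact exists_scaling_zero_one_iff.symm.trans hiff.symm
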